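/- arXiv:1705.08379 — 3 statements merged into one kernel-verified Lean document; each statement's English description precedes it below -/
import Mathlib

section
/- The perfect edge dominating sets of the shield graph are exactly the following five sets of edges: (i) the efficient edge dominating set {v2v4, v6v8, v10v12}; (ii) the three proper sets {v3v4, v6v7, v9v10, v10v11, v11v12, v12v1, v10v12}, {v2v3, v5v6, v6v7, v7v8, v8v9, v6v8, v11v12}, and {v1v2, v2v3, v3v4, v4v5, v2v4, v7v8, v10v11}; and (iii) the full edge set of the shield graph. -/
/-- An edge `e` dominates an edge `f` if they share an endpoint (in particular,
every edge dominates itself). -/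
def edgeDom {V : Type*} (e f : Sym2 V) : Prop := ∃ v, v ∈ e ∧ v ∈ f

/-- `P` is a perfect edge dominating set of `G`. -/
def IsPEDS {V : Type*} (G : SimpleGraph V) (P : Set (Sym2 V)) : Prop :=
  P ⊆ G.edgeSet ∧ ∀ f ∈ G.edgeSet, f ∉ P → ∃! e, e ∈ P ∧ edgeDom e f

/-- `D` is an efficient edge dominating set of `G`. -/
def IsEEDS {V : Type*} (G : SimpleGraph V) (D : Set (Sym2 V)) : Prop :=
  D ⊆ G.edgeSet ∧ ∀ f ∈ G.edgeSet, ∃! e, e ∈ D ∧ edgeDom e f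

/-- The shield graph: the vertex `vᵢ` of the paper corresponds to `i - 1 : Fin 12`.
Its edges are the 12-cycle `v₁v₂, …, v₁₁v₁₂, v₁₂v₁` together with the three
chords `v₂v₄, v₆v₈, v₁₀v₁₂`. -/
def Shield : SimpleGraph (Fin 12) :=
  SimpleGraph.fromRel (fun i j =>
    j = i + 1 ∨ (i = 1 ∧ j = 3) ∨ (i = 5 ∧ j = 7) ∨ (i = 9 ∧ j = 11))

/-!
A perfect edge dominating set `P` is determined by the set `W` of vertices it leaves uncovered: it
consists of the edges avoiding `W`. The sets `W` that arise are the independent ones such that every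
neighbour of a vertex of `W` has a single neighbour outside `W`.

If a vertex of a triangle has a neighbour outside the triangle, this neighbour is in `W` exactly
when one of the other two vertices of the triangle is. Hence, in the shield, `W` is determined by
its trace on the three links `v₁`, `v₅`, `v₉` between the triangles. This trace cannot have exactly
two elements: the third link would have both of its neighbours in `W`. The remaining five traces
all occur.
-/

/-- The edges of `G` with no endpoint in `W`. -/
def edgesAvoiding {V : Type*} (G : SimpleGraph V) (W : Set V) : Set (Sym2 V) :=
  {e ∈ G.edgeSet | ∀ v ∈ e, v ∉ W}

/-- White sets are the sets of vertices left uncovered by a perfect edge dominating set: `W` is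
independent, and every neighbour of a vertex of `W` has a single neighbour outside `W`. Isolated
vertices may belong to `W` or not. -/
structure IsWhiteSet {V : Type*} (G : SimpleGraph V) (W : Set V) : Prop where
  notMem_of_adj : ∀ a b, G.Adj a b → a ∈ W → b ∉ W
  existsUnique_notMem : ∀ a b, G.Adj a b → a ∈ W → ∃! c, G.Adj b c ∧ c ∉ W

section General

variable {V : Type*} {G : SimpleGraph V} {P : Set (Sym2 V)} {W : Set V} {a b c d : V}

theorem edgeDom_mk_iff {e : Sym2 V} : edgeDom e s(a, b) ↔ a ∈ e ∨ b ∈ e := by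
  simp only [edgeDom, Sym2.mem_iff, and_or_left, exists_or, exists_eq_right]

theorem mk_mem_edgesAvoiding : s(a, b) ∈ edgesAvoiding G W ↔ G.Adj a b ∧ a ∉ W ∧ b ∉ W := by
  simp [edgesAvoiding]

theorem edgesAvoiding_eq_iff :
    edgesAvoiding G W = P ↔ ∀ a b, s(a, b) ∈ P ↔ G.Adj a b ∧ a ∉ W ∧ b ∉ W := by
  refine ⟨fun h a b ↦ h ▸ mk_mem_edgesAvoiding, fun h ↦ Set.ext fun e ↦ ?_⟩
  induction e with
  | _ a b => exact mk_mem_edgesAvoiding.trans (h a b).symm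

theorem edgesAvoiding_empty : edgesAvoiding G ∅ = G.edgeSet :=
  edgesAvoiding_eq_iff.2 fun _ _ ↦ by simp

theorem existsUnique_edgeDom_iff_of_uncovered (ha : ∀ w, s(a, w) ∉ P) :
    (∃! e, e ∈ P ∧ edgeDom e s(a, b)) ↔ ∃! c, s(b, c) ∈ P := by
  have dom_iff {e : Sym2 V} (he : e ∈ P) : edgeDom e s(a, b) ↔ b ∈ e := by
    refine edgeDom_mk_iff.trans (or_iff_right ?_)
    rintro ⟨w, rfl⟩
    exact ha w he
  constructor
  · rintro ⟨e, ⟨he, hdom⟩, huniq⟩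
    obtain ⟨c, rfl⟩ := (dom_iff he).1 hdom
    exact ⟨c, he, fun c' hc' ↦
      Sym2.congr_right.1 (huniq _ ⟨hc', (dom_iff hc').2 (Sym2.mem_mk_left b c')⟩)⟩
  · rintro ⟨c, hc, huniq⟩
    refine ⟨s(b, c), ⟨hc, (dom_iff hc).2 (Sym2.mem_mk_left b c)⟩, ?_⟩
    rintro e ⟨he, hdom⟩
    obtain ⟨c', rfl⟩ := (dom_iff he).1 hdom
    rw [huniq c' he]

theorem IsPEDS.uncovered_of_mk_notMem (hP : IsPEDS G P) (hab : G.Adj a b) (hmem : s(a, b) ∉ P) :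
    (∀ w, s(a, w) ∉ P) ∨ ∀ w, s(b, w) ∉ P := by
  by_contra! ⟨⟨x, hx⟩, ⟨y, hy⟩⟩
  have hxy : s(a, x) = s(b, y) :=
    (hP.2 _ hab hmem).unique ⟨hx, edgeDom_mk_iff.2 (.inl (Sym2.mem_mk_left a x))⟩
      ⟨hy, edgeDom_mk_iff.2 (.inr (Sym2.mem_mk_left b y))⟩
  have hax : s(a, x) = s(a, b) :=
    (Sym2.mem_and_mem_iff hab.ne).1 ⟨Sym2.mem_mk_left a x, hxy ▸ Sym2.mem_mk_left b y⟩
  exact hmem (hax ▸ hx)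

theorem IsPEDS.mk_mem_iff (hP : IsPEDS G P) :
    s(a, b) ∈ P ↔ G.Adj a b ∧ (∃ w, s(a, w) ∈ P) ∧ ∃ w, s(b, w) ∈ P := by
  refine ⟨fun h ↦ ⟨hP.1 h, ⟨b, h⟩, ⟨a, Sym2.eq_swap ▸ h⟩⟩, fun ⟨hab, ⟨x, hx⟩, ⟨y, hy⟩⟩ ↦ ?_⟩
  by_contra hmem
  exact (hP.uncovered_of_mk_notMem hab hmem).elim (· x hx) (· y hy)

theorem IsPEDS.eq_edgesAvoiding (hP : IsPEDS G P) :
    P = edgesAvoiding G {v | ∀ w, s(v, w) ∉ P} :=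
  (edgesAvoiding_eq_iff.2 fun _ _ ↦ by simpa using hP.mk_mem_iff).symm

theorem IsPEDS.isWhiteSet (hP : IsPEDS G P) : IsWhiteSet G {v | ∀ w, s(v, w) ∉ P} := by
  have unique_edge {a b : V} (hab : G.Adj a b) (ha : ∀ w, s(a, w) ∉ P) : ∃! c, s(b, c) ∈ P :=
    (existsUnique_edgeDom_iff_of_uncovered ha).1 (hP.2 _ hab (ha b))
  refine ⟨fun a b hab ha hb ↦ ?_, fun a b hab ha ↦ ?_⟩
  · obtain ⟨c, hc, -⟩ := unique_edge hab ha
    exact hb c hc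
  · obtain ⟨c, hc, huniq⟩ := unique_edge hab ha
    refine ⟨c, ?_, fun c' ⟨hbc', hc'⟩ ↦ huniq c' ?_⟩
    · exact ⟨hP.1 hc, fun hc' ↦ hc' b (Sym2.eq_swap ▸ hc)⟩
    · exact hP.mk_mem_iff.2 ⟨hbc', ⟨c, hc⟩, by simpa using hc'⟩

theorem IsWhiteSet.isPEDS_edgesAvoiding (hW : IsWhiteSet G W) :
    IsPEDS G (edgesAvoiding G W) := by
  have dominated {a b : V} (hab : G.Adj a b) (ha : a ∈ W) :
      ∃! e, e ∈ edgesAvoiding G W ∧ edgeDom e s(a, b) := by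
    have hb : b ∉ W := hW.notMem_of_adj a b hab ha
    rw [existsUnique_edgeDom_iff_of_uncovered fun w h ↦ (mk_mem_edgesAvoiding.1 h).2.1 ha]
    simpa [mk_mem_edgesAvoiding, hb] using hW.existsUnique_notMem a b hab ha
  refine ⟨fun e he ↦ he.1, fun e he hmem ↦ ?_⟩
  induction e with
  | _ a b =>
    by_cases ha : a ∈ W
    · exact dominated he ha
    · have hb : b ∈ W := by
        by_contra hb
        exact hmem (mk_mem_edgesAvoiding.2 ⟨he, ha, hb⟩)
      exact Sym2.eq_swap (a := a) ▸ dominated (SimpleGraph.Adj.symm he) hb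

theorem isPEDS_iff_exists_isWhiteSet :
    IsPEDS G P ↔ ∃ W, IsWhiteSet G W ∧ P = edgesAvoiding G W := by
  constructor
  · exact fun hP ↦ ⟨_, hP.isWhiteSet, hP.eq_edgesAvoiding⟩
  · rintro ⟨W, hW, rfl⟩
    exact hW.isPEDS_edgesAvoiding

theorem IsPEDS.isEEDS_of_pairwise (hP : IsPEDS G P) (hdisj : P.Pairwise fun e f ↦ ¬ edgeDom e f) :
    IsEEDS G P := by
  refine ⟨hP.1, fun f hf ↦ ?_⟩
  by_cases hfP : f ∈ P
  · have hself : edgeDom f f := ⟨f.out.1, f.out_fst_mem, f.out_fst_mem⟩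
    exact ⟨f, ⟨hfP, hself⟩, fun e ⟨heP, hef⟩ ↦ hdisj.eq heP hfP (not_not.2 hef)⟩
  · exact hP.2 f hf hfP

namespace IsWhiteSet

theorem empty : IsWhiteSet G ∅ :=
  ⟨fun _ _ _ ↦ False.elim, fun _ _ _ ↦ False.elim⟩

instance [Fintype V] [DecidableEq V] [DecidableRel G.Adj] [DecidablePred (· ∈ W)] :
    Decidable (IsWhiteSet G W) :=
  decidable_of_iff
    ((∀ a b, G.Adj a b → a ∈ W → b ∉ W) ∧
      ∀ a b, G.Adj a b → a ∈ W → ∃ c, (G.Adj b c ∧ c ∉ W) ∧ ∀ d, G.Adj b d ∧ d ∉ W → d = c)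
    ⟨fun ⟨h₁, h₂⟩ ↦ ⟨h₁, h₂⟩, fun ⟨h₁, h₂⟩ ↦ ⟨h₁, h₂⟩⟩

theorem not_forall_adj_mem (hW : IsWhiteSet G W) (hab : G.Adj a b) (ha : a ∈ W) :
    ¬ ∀ c, G.Adj b c → c ∈ W := by
  obtain ⟨c, ⟨hbc, hc⟩, -⟩ := hW.existsUnique_notMem a b hab ha
  exact fun h ↦ hc (h c hbc)

theorem mem_iff_of_triangle (hW : IsWhiteSet G W) (hab : G.Adj a b) (hac : G.Adj a c)
    (hbc : G.Adj b c) (had : G.Adj a d) (hdb : d ≠ b) (hdc : d ≠ c) :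
    d ∈ W ↔ b ∈ W ∨ c ∈ W := by
  have eq_of_notMem {x y z : V} (hx : G.Adj a x) (hxW : x ∈ W) (hy : G.Adj a y) (hyW : y ∉ W)
      (hz : G.Adj a z) (hzW : z ∉ W) : y = z :=
    (hW.existsUnique_notMem x a hx.symm hxW).unique ⟨hy, hyW⟩ ⟨hz, hzW⟩
  constructor
  · intro hd
    by_contra! ⟨hb, hc⟩
    exact hbc.ne (eq_of_notMem had hd hab hb hac hc)
  · rintro (hb | hc) <;> by_contra hd
    · exact hdc (eq_of_notMem hab hb had hd hac (hW.notMem_of_adj b c hbc hb))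
    · exact hdb (eq_of_notMem hac hc had hd hab (hW.notMem_of_adj c b hbc.symm hc))

end IsWhiteSet

end General

instance : DecidableRel Shield.Adj :=
  inferInstanceAs (DecidableRel (SimpleGraph.fromRel _).Adj)

/-- The three vertices of the shield outside its triangles. The link `i` is followed along the cycle
by the triangle `i + 1`, `i + 2`, `i + 3` and then by the next link `i + 4`. -/
def shieldLinks : Finset (Fin 12) := {0, 4, 8}

theorem shield_adj_add_one : ∀ i, Shield.Adj i (i + 1) := by decide

theorem shield_chord_adj : ∀ i ∈ shieldLinks, Shield.Adj (i + 1) (i + 3) := by decide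

theorem add_four_mem_shieldLinks : ∀ i ∈ shieldLinks, i + 4 ∈ shieldLinks := by decide

theorem shield_adj_next_link_iff :
    ∀ i ∈ shieldLinks, ∀ j, Shield.Adj (i + 4) j ↔ j = i + 3 ∨ j = i + 4 + 1 := by
  decide

theorem exists_shieldLink_triangle :
    ∀ v, ∃ i ∈ shieldLinks, v = i ∨ v = i + 1 ∨ v = i + 2 ∨ v = i + 3 := by
  decide

namespace IsWhiteSet

variable {W W' : Set (Fin 12)} {i : Fin 12}

theorem shield_triangle_mem_iff (hW : IsWhiteSet Shield W) (hi : i ∈ shieldLinks) :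
    (i + 1 ∈ W ↔ i ∉ W ∧ i + 4 ∈ W) ∧ (i + 2 ∈ W ↔ i ∈ W ∧ i + 4 ∈ W) ∧
      (i + 3 ∈ W ↔ i ∈ W ∧ i + 4 ∉ W) := by
  have h01 : Shield.Adj i (i + 1) := shield_adj_add_one i
  have h12 : Shield.Adj (i + 1) (i + 2) := by simpa [add_assoc] using shield_adj_add_one (i + 1)
  have h23 : Shield.Adj (i + 2) (i + 3) := by simpa [add_assoc] using shield_adj_add_one (i + 2)
  have h34 : Shield.Adj (i + 3) (i + 4) := by simpa [add_assoc] using shield_adj_add_one (i + 3)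
  have h13 : Shield.Adj (i + 1) (i + 3) := shield_chord_adj i hi
  have link_mem_iff : i ∈ W ↔ i + 2 ∈ W ∨ i + 3 ∈ W :=
    hW.mem_iff_of_triangle h12 h13 h23 h01.symm (by simp) (by simp)
  have next_link_mem_iff : i + 4 ∈ W ↔ i + 2 ∈ W ∨ i + 1 ∈ W :=
    hW.mem_iff_of_triangle h23.symm h13.symm h12.symm h34 (by simp) (by simp)
  have := hW.notMem_of_adj _ _ h12
  have := hW.notMem_of_adj _ _ h23
  have := hW.notMem_of_adj _ _ h13
  tauto

-- Were the middle link outside `W`, both of its neighbours would be in `W`.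
theorem shield_middle_link_mem (hW : IsWhiteSet Shield W) (hi : i ∈ shieldLinks) (hiW : i ∈ W)
    (hi' : i + 8 ∈ W) : i + 4 ∈ W := by
  by_contra hmid
  have hprev : i + 3 ∈ W := (hW.shield_triangle_mem_iff hi).2.2.2 ⟨hiW, hmid⟩
  have hnext : i + 4 + 1 ∈ W :=
    (hW.shield_triangle_mem_iff (add_four_mem_shieldLinks i hi)).1.2
      ⟨hmid, by simpa [add_assoc] using hi'⟩
  have hadj := shield_adj_next_link_iff i hi
  refine hW.not_forall_adj_mem ((hadj _).2 (.inl rfl)).symm hprev fun j hj ↦ ?_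
  rcases (hadj j).1 hj with rfl | rfl <;> assumption

theorem eq_of_forall_shieldLinks (hW : IsWhiteSet Shield W) (hW' : IsWhiteSet Shield W')
    (h : ∀ i ∈ shieldLinks, i ∈ W ↔ i ∈ W') : W = W' := by
  ext v
  obtain ⟨i, hi, hv⟩ := exists_shieldLink_triangle v
  have hlink := h i hi
  have hnext := h (i + 4) (add_four_mem_shieldLinks i hi)
  obtain ⟨h1, h2, h3⟩ := hW.shield_triangle_mem_iff hi
  obtain ⟨h1', h2', h3'⟩ := hW'.shield_triangle_mem_iff hi
  rcases hv with rfl | rfl | rfl | rfl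
  · exact hlink
  · rw [h1, h1', hlink, hnext]
  · rw [h2, h2', hlink, hnext]
  · rw [h3, h3', hlink, hnext]

end IsWhiteSet

theorem isWhiteSet_shield_iff {W : Set (Fin 12)} :
    IsWhiteSet Shield W ↔
      W = {0, 2, 4, 6, 8, 10} ∨ W = {1, 4, 7} ∨ W = {0, 3, 9} ∨ W = {5, 8, 11} ∨ W = ∅ := by
  have hall : IsWhiteSet Shield {0, 2, 4, 6, 8, 10} := by decide
  have h4 : IsWhiteSet Shield {1, 4, 7} := by decide
  have h0 : IsWhiteSet Shield {0, 3, 9} := by decide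
  have h8 : IsWhiteSet Shield {5, 8, 11} := by decide
  constructor
  · intro hW
    have h048 : 0 ∈ W → 8 ∈ W → 4 ∈ W := hW.shield_middle_link_mem (i := 0) (by decide)
    have h480 : 4 ∈ W → 0 ∈ W → 8 ∈ W := hW.shield_middle_link_mem (i := 4) (by decide)
    have h804 : 8 ∈ W → 4 ∈ W → 0 ∈ W := hW.shield_middle_link_mem (i := 8) (by decide)
    have eq_of_links {W' : Set (Fin 12)} (hW' : IsWhiteSet Shield W')
        (h : (0 ∈ W ↔ 0 ∈ W') ∧ (4 ∈ W ↔ 4 ∈ W') ∧ (8 ∈ W ↔ 8 ∈ W')) : W = W' :=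
      hW.eq_of_forall_shieldLinks hW' (by simpa [shieldLinks] using h)
    by_cases m0 : 0 ∈ W <;> by_cases m4 : 4 ∈ W
    · exact .inl (eq_of_links hall (by simp_all))
    · exact .inr (.inr (.inl (eq_of_links h0 (by simp_all))))
    · exact .inr (.inl (eq_of_links h4 (by simp_all)))
    · by_cases m8 : 8 ∈ W
      · exact .inr (.inr (.inr (.inl (eq_of_links h8 (by simp_all)))))
      · exact .inr (.inr (.inr (.inr (eq_of_links .empty (by simp_all)))))
  · rintro (rfl | rfl | rfl | rfl | rfl)
    exacts [hall, h4, h0, h8, .empty]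

theorem edgesAvoiding_shield_all_links :
    edgesAvoiding Shield {0, 2, 4, 6, 8, 10} = {s(1, 3), s(5, 7), s(9, 11)} :=
  edgesAvoiding_eq_iff.2 (by decide)

theorem edgesAvoiding_shield_link_four :
    edgesAvoiding Shield {1, 4, 7} =
      {s(2, 3), s(5, 6), s(8, 9), s(9, 10), s(10, 11), s(11, 0), s(9, 11)} :=
  edgesAvoiding_eq_iff.2 (by decide)

theorem edgesAvoiding_shield_link_zero :
    edgesAvoiding Shield {0, 3, 9} =
      {s(1, 2), s(4, 5), s(5, 6), s(6, 7), s(7, 8), s(5, 7), s(10, 11)} :=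
  edgesAvoiding_eq_iff.2 (by decide)

theorem edgesAvoiding_shield_link_eight :
    edgesAvoiding Shield {5, 8, 11} =
      {s(0, 1), s(1, 2), s(2, 3), s(3, 4), s(1, 3), s(6, 7), s(9, 10)} :=
  edgesAvoiding_eq_iff.2 (by decide)

/-- The perfect edge dominating sets of the shield graph are exactly: the
efficient edge dominating set `{v₂v₄, v₆v₈, v₁₀v₁₂}`, three proper perfect edge
dominating sets, and the full edge set. -/
theorem shield_peds :
    (∀ P : Set (Sym2 (Fin 12)), IsPEDS Shield P ↔
      (P = {s(1, 3), s(5, 7), s(9, 11)} ∨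
       P = {s(2, 3), s(5, 6), s(8, 9), s(9, 10), s(10, 11), s(11, 0), s(9, 11)} ∨
       P = {s(1, 2), s(4, 5), s(5, 6), s(6, 7), s(7, 8), s(5, 7), s(10, 11)} ∨
       P = {s(0, 1), s(1, 2), s(2, 3), s(3, 4), s(1, 3), s(6, 7), s(9, 10)} ∨
       P = Shield.edgeSet)) ∧
    IsEEDS Shield {s(1, 3), s(5, 7), s(9, 11)} := by
  constructor
  · intro P
    simp only [isPEDS_iff_exists_isWhiteSet, isWhiteSet_shield_iff, or_and_right, exists_or,
      exists_eq_left, edgesAvoiding_shield_all_links, edgesAvoiding_shield_link_four,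
      edgesAvoiding_shield_link_zero, edgesAvoiding_shield_link_eight, edgesAvoiding_empty]
  · have hwhite : IsWhiteSet Shield {0, 2, 4, 6, 8, 10} := isWhiteSet_shield_iff.2 (.inl rfl)
    have hPEDS : IsPEDS Shield {s(1, 3), s(5, 7), s(9, 11)} :=
      edgesAvoiding_shield_all_links ▸ hwhite.isPEDS_edgesAvoiding
    exact hPEDS.isEEDS_of_pairwise (by simp [Set.Pairwise, edgeDom])
end

section
/- Let G be a cubic (3-regular) finite simple graph on n vertices and M(G) its magnification. Then G admits an efficient edge dominating set if and only if M(G) has a perfect edge dominating set of size at most 57n/10. -/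
/-- The contact vertices `v₃, v₇, v₁₁` of the shield graph. -/
def Contacts : Set (Fin 12) := {2, 6, 10}

/-- `G` is `r`-regular: every vertex has exactly `r` neighbors. -/
def IsRegular' {V : Type*} (G : SimpleGraph V) (r : ℕ) : Prop :=
  ∀ v : V, (G.neighborSet v).ncard = r

/-- `H` is the magnification of the cubic graph `G`, witnessed by the
contact-assignment `f`. -/
def IsMagnification {V : Type*} (G : SimpleGraph V) (f : V → V → Fin 12)
    (H : SimpleGraph (V × Fin 12)) : Prop :=
  (∀ v u, G.Adj v u → f v u ∈ Contacts) ∧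
  (∀ v, Set.InjOn (f v) (G.neighborSet v)) ∧
  (∀ v, ∀ c ∈ Contacts, ∃ u, G.Adj v u ∧ f v u = c) ∧
  (∀ a b : V × Fin 12, H.Adj a b ↔
    ((a.1 = b.1 ∧ Shield.Adj a.2 b.2) ∨
     (G.Adj a.1 b.1 ∧ f a.1 b.1 = a.2 ∧ f b.1 a.1 = b.2)))

/-!
A subgraph `K ≤ H` is the edge set of a perfect edge dominating set exactly when the `K`-degrees of
the ends of each edge of `H` outside `K` add up to `1`. Vertices of `K`-degree at least `2` thus
keep all their edges, and in a triangle either all three vertices do, or exactly one edge is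
selected and the degrees are `1, 1, 0`. A triangle of a shield is therefore *black* (degrees
`3, 3, 3`) or has its only uncovered vertex at its contact `C`, on its left `L` or on its right `R`.
The vertex of degree `2` between two consecutive triangles only allows the transitions `BB`, `BL`,
`LC`, `LR`, `RB`, `CC`, `CR`, whose closed walks of length three are `BBB`, `CCC` and the rotations
of `BLR`. The sums of the `K`-degrees over the shield are then `33`, `6` and `15`, and the links of
the shield that belong to `K` are its links at the black triangles.

Hence the selected links form a perfect edge dominating set of `G` with degrees `0`, `1` and `3`.
The edges of `G` outside it join degree `0` to degree `1`, so counting them twice gives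
`10 |K| = 57 n + 108 t`, where `t` is the number of vertices of degree `3`. The bound `57 n / 10`
says that `t = 0`, i.e. that the selected links form an efficient edge dominating set.
-/

open scoped Finset

section PerfectDomination

variable {W : Type*} {H K : SimpleGraph W}

theorem isEEDS_iff_isPEDS {D : Set (Sym2 W)} :
    IsEEDS H D ↔ IsPEDS H D ∧ ∀ e ∈ D, ∀ e' ∈ D, edgeDom e e' → e = e' := by
  have edgeDom_self (e : Sym2 W) : edgeDom e e := ⟨e.out.1, e.out_fst_mem, e.out_fst_mem⟩
  constructor
  · rintro ⟨hsub, hdom⟩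
    exact ⟨⟨hsub, fun f hf _ => hdom f hf⟩, fun e he e' he' hee' =>
      (hdom e' (hsub he')).unique ⟨he, hee'⟩ ⟨he', edgeDom_self e'⟩⟩
  · rintro ⟨⟨hsub, hdom⟩, hmatch⟩
    refine ⟨hsub, fun f hf => ?_⟩
    by_cases hfD : f ∈ D
    · exact ⟨f, ⟨hfD, edgeDom_self f⟩, fun e he => hmatch e he.1 f hfD he.2⟩
    · exact hdom f hf hfD

theorem exists_edgeSet_eq_of_subset {P : Set (Sym2 W)} (hP : P ⊆ H.edgeSet) :
    ∃ K : SimpleGraph W, K.edgeSet = P :=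
  ⟨.fromEdgeSet P, (SimpleGraph.edgeSet_eq_iff _ _).2
    ⟨rfl, Set.disjoint_left.2 fun _ he => H.not_isDiag_of_mem_edgeSet (hP he)⟩⟩

theorem forall_edgeDom_imp_eq_iff_degree_le_one [K.LocallyFinite] :
    (∀ e ∈ K.edgeSet, ∀ e' ∈ K.edgeSet, edgeDom e e' → e = e') ↔ ∀ x, K.degree x ≤ 1 := by
  simp_rw [← SimpleGraph.card_neighborFinset_eq_degree, Finset.card_le_one,
    SimpleGraph.mem_neighborFinset]
  constructor
  · intro h x a ha b hb
    exact Sym2.congr_right.1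
      (h s(x, a) ha s(x, b) hb ⟨x, Sym2.mem_mk_left x a, Sym2.mem_mk_left x b⟩)
  · rintro h e he e' he' ⟨x, ⟨a, rfl⟩, ⟨b, rfl⟩⟩
    rw [h x a he b he']

theorem existsUnique_edgeDom_iff [K.LocallyFinite] {x y : W} (hne : x ≠ y) (hxy : ¬ K.Adj x y) :
    (∃! e, e ∈ K.edgeSet ∧ edgeDom e s(x, y)) ↔ K.degree x + K.degree y = 1 := by
  classical
  have hdisj : Disjoint (K.incidenceFinset x) (K.incidenceFinset y) := by
    rw [Finset.disjoint_left]
    intro e hx hy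
    rw [SimpleGraph.mem_incidenceFinset] at hx hy
    obtain rfl : e = s(x, y) := (Sym2.mem_and_mem_iff hne).1 ⟨hx.2, hy.2⟩
    exact hxy hx.1
  rw [← SimpleGraph.card_incidenceFinset_eq_degree, ← SimpleGraph.card_incidenceFinset_eq_degree,
    ← Finset.card_union_of_disjoint hdisj, Finset.card_eq_one, Finset.singleton_iff_unique_mem]
  refine existsUnique_congr fun e => ?_
  simp only [Finset.mem_union, SimpleGraph.mem_incidenceFinset, SimpleGraph.incidenceSet,
    Set.mem_ofPred_eq, edgeDom, Sym2.mem_iff]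
  grind

/-- The subgraph `K` of `H` whose edges form a perfect edge dominating set of `H`, expressed by
degrees: see `isPEDS_edgeSet_iff`. -/
structure IsPerfectDominating (H K : SimpleGraph W) [K.LocallyFinite] : Prop where
  le : K ≤ H
  degree_add_degree : ∀ {x y}, H.Adj x y → ¬ K.Adj x y → K.degree x + K.degree y = 1

theorem isPEDS_edgeSet_iff [K.LocallyFinite] :
    IsPEDS H K.edgeSet ↔ IsPerfectDominating H K := by
  constructor
  · rintro ⟨hsub, hdom⟩
    exact ⟨SimpleGraph.edgeSet_subset_edgeSet.1 hsub, fun hH hK =>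
      (existsUnique_edgeDom_iff hH.ne hK).1 (hdom _ hH hK)⟩
  · intro h
    refine ⟨SimpleGraph.edgeSet_mono h.le, Sym2.ind fun x y hH hK => ?_⟩
    exact (existsUnique_edgeDom_iff hH.ne hK).2 (h.degree_add_degree hH hK)

theorem isEEDS_edgeSet_iff [K.LocallyFinite] :
    IsEEDS H K.edgeSet ↔ IsPerfectDominating H K ∧ ∀ x, K.degree x ≤ 1 := by
  rw [isEEDS_iff_isPEDS, isPEDS_edgeSet_iff, forall_edgeDom_imp_eq_iff_degree_le_one]

theorem two_le_degree_of_adj_adj [K.LocallyFinite] {x y z : W} (hxy : K.Adj x y) (hxz : K.Adj x z)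
    (hne : y ≠ z) : 2 ≤ K.degree x :=
  Finset.one_lt_card.2 ⟨y, by simpa using hxy, z, by simpa using hxz, hne⟩

namespace IsPerfectDominating

variable [K.LocallyFinite] {x y z w : W}

theorem degree_eq_ncard_of_two_le (h : IsPerfectDominating H K) (hx : 2 ≤ K.degree x) :
    K.degree x = (H.neighborSet x).ncard := by
  have hset : H.neighborSet x = K.neighborFinset x := by
    ext y
    rw [Finset.mem_coe, SimpleGraph.mem_neighborFinset]
    refine ⟨fun hxy => ?_, fun hxy => h.le hxy⟩
    by_contra hK
    have := h.degree_add_degree hxy hK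
    omega
  rw [hset, Set.ncard_coe_finset, SimpleGraph.card_neighborFinset_eq_degree]

theorem degree_triangle (h : IsPerfectDominating H K) (hxy : H.Adj x y) (hyz : H.Adj y z)
    (hxz : H.Adj x z) :
    (2 ≤ K.degree x ∧ 2 ≤ K.degree y ∧ 2 ≤ K.degree z) ∨
      (K.degree x = 0 ∧ K.degree y = 1 ∧ K.degree z = 1) ∨
      (K.degree x = 1 ∧ K.degree y = 0 ∧ K.degree z = 1) ∨
      (K.degree x = 1 ∧ K.degree y = 1 ∧ K.degree z = 0) := by
  by_cases Kxy : K.Adj x y <;> by_cases Kyz : K.Adj y z <;> by_cases Kxz : K.Adj x z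
  · exact .inl ⟨two_le_degree_of_adj_adj Kxy Kxz hyz.ne,
      two_le_degree_of_adj_adj Kxy.symm Kyz hxz.ne,
      two_le_degree_of_adj_adj Kxz.symm Kyz.symm hxy.ne⟩
  all_goals
    have := fun hK => h.degree_add_degree hxy hK
    have := fun hK => h.degree_add_degree hyz hK
    have := fun hK => h.degree_add_degree hxz hK
    have := fun hK : K.Adj x y => And.intro hK.degree_pos_left hK.degree_pos_right
    have := fun hK : K.Adj y z => And.intro hK.degree_pos_left hK.degree_pos_right
    have := fun hK : K.Adj x z => And.intro hK.degree_pos_left hK.degree_pos_right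
    grind

/-- Otherwise `x w` would be the only selected edge at `x`, leaving `y` and `z` uncovered. -/
theorem two_le_degree_of_adj_outside_triangle (h : IsPerfectDominating H K) (hxy : H.Adj x y)
    (hyz : H.Adj y z) (hxz : H.Adj x z) (hxw : K.Adj x w) (hwy : w ≠ y) (hwz : w ≠ z) :
    2 ≤ K.degree x := by
  by_cases Kxy : K.Adj x y
  · exact two_le_degree_of_adj_adj hxw Kxy hwy
  by_cases Kxz : K.Adj x z
  · exact two_le_degree_of_adj_adj hxw Kxz hwz
  have hx := hxw.degree_pos_left
  have hy := h.degree_add_degree hxy Kxy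
  have hz := h.degree_add_degree hxz Kxz
  by_cases Kyz : K.Adj y z
  · have := Kyz.degree_pos_left
    omega
  · have := h.degree_add_degree hyz Kyz
    omega

theorem degree_of_neighborSet_eq_pair (h : IsPerfectDominating H K) (hyz : y ≠ z)
    (hx : H.neighborSet x = {y, z}) (hy : K.Adj x y → 2 ≤ K.degree y)
    (hz : K.Adj x z → 2 ≤ K.degree z) :
    (2 ≤ K.degree y ∧ K.degree x = 2 ∧ 2 ≤ K.degree z) ∨
      (2 ≤ K.degree y ∧ K.degree x = 1 ∧ K.degree z = 0) ∨
      (K.degree y = 0 ∧ K.degree x = 1 ∧ 2 ≤ K.degree z) ∨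
      (K.degree y = 1 ∧ K.degree x = 0 ∧ K.degree z = 1) := by
  have hH (w : W) : H.Adj x w ↔ w = y ∨ w = z := Set.ext_iff.1 hx w
  have hxy : H.Adj x y := (hH y).2 (.inl rfl)
  have hxz : H.Adj x z := (hH z).2 (.inr rfl)
  by_cases Kxy : K.Adj x y <;> by_cases Kxz : K.Adj x z
  · have hdeg := h.degree_eq_ncard_of_two_le (two_le_degree_of_adj_adj Kxy Kxz hyz)
    rw [hx, Set.ncard_pair hyz] at hdeg
    exact .inl ⟨hy Kxy, hdeg, hz Kxz⟩
  · have hpos := Kxy.degree_pos_left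
    have hsum := h.degree_add_degree hxz Kxz
    exact .inr (.inl ⟨hy Kxy, by omega, by omega⟩)
  · have hpos := Kxz.degree_pos_left
    have hsum := h.degree_add_degree hxy Kxy
    exact .inr (.inr (.inl ⟨by omega, by omega, hz Kxz⟩))
  · have hdeg : K.degree x = 0 := by
      by_contra hpos
      obtain ⟨w, hw⟩ := (K.degree_pos_iff_exists_adj x).1 (Nat.pos_of_ne_zero hpos)
      rcases (hH w).1 (h.le hw) with rfl | rfl <;> contradiction
    have hsumy := h.degree_add_degree hxy Kxy
    have hsumz := h.degree_add_degree hxz Kxz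
    exact .inr (.inr (.inr ⟨by omega, hdeg, by omega⟩))

theorem degree_sdiff_add_degree [(H \ K).LocallyFinite] [H.LocallyFinite]
    (h : IsPerfectDominating H K) (x : W) : (H \ K).degree x + K.degree x = H.degree x := by
  classical
  have hsub : K.neighborFinset x ⊆ H.neighborFinset x := fun y => by
    simpa only [SimpleGraph.mem_neighborFinset] using @h.le x y
  simp_rw [← SimpleGraph.card_neighborFinset_eq_degree, SimpleGraph.neighborFinset_sdiff,
    Finset.card_sdiff_add_card_eq_card hsub]

/-- The edges of `H` outside `K` form a bipartite graph between the vertices of `K`-degree `0`,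
where it has degree `r`, and those of `K`-degree `1`, where it has degree `r - 1`. -/
theorem mul_card_degree_eq_zero [Fintype W] [H.LocallyFinite] {r : ℕ}
    (h : IsPerfectDominating H K) (hH : H.IsRegularOfDegree r) :
    r * #{x | K.degree x = 0} = (r - 1) * #{x | K.degree x = 1} := by
  classical
  have hsum {x y : W} (hxy : (H \ K).Adj x y) : K.degree x + K.degree y = 1 :=
    h.degree_add_degree hxy.1 hxy.2
  have hdeg (x : W) : (H \ K).degree x + K.degree x = r :=
    (h.degree_sdiff_add_degree x).trans (hH x)
  rw [mul_comm r, mul_comm (r - 1)]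
  refine Finset.card_mul_eq_card_mul (H \ K).Adj (fun x hx => ?_) (fun y hy => ?_)
  · rw [Finset.mem_filter_univ] at hx
    have hnbr : Finset.bipartiteAbove (H \ K).Adj {y | K.degree y = 1} x =
        (H \ K).neighborFinset x := by
      ext y
      simp only [Finset.mem_bipartiteAbove, Finset.mem_filter_univ,
        SimpleGraph.mem_neighborFinset, and_iff_right_iff_imp]
      intro hxy
      have := hsum hxy
      omega
    rw [hnbr, SimpleGraph.card_neighborFinset_eq_degree, ← hdeg x, hx, add_zero]
  · rw [Finset.mem_filter_univ] at hy
    have hnbr : Finset.bipartiteBelow (H \ K).Adj {x | K.degree x = 0} y =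
        (H \ K).neighborFinset y := by
      ext x
      simp only [Finset.mem_bipartiteBelow, Finset.mem_filter_univ,
        SimpleGraph.mem_neighborFinset, (H \ K).adj_comm x y, and_iff_right_iff_imp]
      intro hyx
      have := hsum hyx
      omega
    rw [hnbr, SimpleGraph.card_neighborFinset_eq_degree, ← hdeg y, hy, add_tsub_cancel_right]

end IsPerfectDominating

section Labelling

/-- A labelling of the vertices of `H` by what should become their degrees in a perfect dominating
subgraph, all labels from `2` on being interchangeable: the vertices labelled `0` (uncovered) only
have neighbours labelled `1`, and those labelled `1` have exactly one covered neighbour. -/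
structure IsPerfectLabelling (H : SimpleGraph W) (ℓ : W → ℕ) : Prop where
  eq_one_of_adj : ∀ x y, H.Adj x y → ℓ x = 0 → ℓ y = 1
  existsUnique_adj : ∀ x, ℓ x = 1 → ∃! y, H.Adj x y ∧ ℓ y ≠ 0

/-- The subgraph of `H` that a perfect labelling `ℓ` describes. -/
def labelledSubgraph (H : SimpleGraph W) (ℓ : W → ℕ) : SimpleGraph W where
  Adj x y := H.Adj x y ∧ ℓ x + ℓ y ≠ 1
  symm := ⟨fun x y hxy => ⟨hxy.1.symm, add_comm (ℓ x) (ℓ y) ▸ hxy.2⟩⟩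
  loopless := ⟨fun _ hx => hx.1.ne rfl⟩

theorem IsPerfectLabelling.isPerfectDominating {ℓ : W → ℕ} [(labelledSubgraph H ℓ).LocallyFinite]
    (hℓ : IsPerfectLabelling H ℓ) : IsPerfectDominating H (labelledSubgraph H ℓ) := by
  have hzero {x : W} (hx : ℓ x = 0) : (labelledSubgraph H ℓ).degree x = 0 := by
    by_contra hpos
    obtain ⟨y, hxy, hne⟩ :=
      ((labelledSubgraph H ℓ).degree_pos_iff_exists_adj x).1 (Nat.pos_of_ne_zero hpos)
    rw [hx, hℓ.eq_one_of_adj x y hxy hx] at hne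
    exact hne rfl
  have hone {x : W} (hx : ℓ x = 1) : (labelledSubgraph H ℓ).degree x = 1 := by
    rw [SimpleGraph.degree_eq_one_iff_existsUnique_adj]
    simpa only [labelledSubgraph, hx, ne_eq, Nat.add_eq_left] using hℓ.existsUnique_adj x hx
  refine ⟨fun _ _ hxy => hxy.1, fun {x y} hxy hK => ?_⟩
  have hsum : ℓ x + ℓ y = 1 := by
    by_contra hne
    exact hK ⟨hxy, hne⟩
  rcases Nat.add_eq_one_iff.1 hsum with ⟨hx, hy⟩ | ⟨hx, hy⟩
  · rw [hzero hx, hone hy]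
  · rw [hone hx, hzero hy]

end Labelling

end PerfectDomination

section Shield

instance shieldDecidableRelAdj : DecidableRel Shield.Adj := fun i j =>
  decidable_of_iff _ (SimpleGraph.fromRel_adj _ i j).symm

instance contactsDecidablePred : DecidablePred (· ∈ Contacts) := fun i =>
  inferInstanceAs (Decidable (i = 2 ∨ i = 6 ∨ i = 10))

/-- The triangles of the shield are `c - 1`, `c`, `c + 1` for the contacts `c`, and the vertices
`c + 2` of degree `2` separate each of them from the next one. In these terms, these are the
restrictions on the degrees `d i` of the shield vertices in a perfect dominating subgraph of a
magnification. -/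
structure IsShieldDegree (d : Fin 12 → ℕ) : Prop where
  triangle : ∀ c ∈ Contacts, (d (c - 1), d c, d (c + 1)) ∈
    ({(3, 3, 3), (0, 1, 1), (1, 0, 1), (1, 1, 0)} : Set (ℕ × ℕ × ℕ))
  separator : ∀ c ∈ Contacts, (d (c + 1), d (c + 2), d (c + 3)) ∈
    ({(3, 2, 3), (3, 1, 0), (0, 1, 3), (1, 0, 1)} : Set (ℕ × ℕ × ℕ))

/-- Call a triangle black if its degrees are `3, 3, 3`, and otherwise of type `C`, `L` or `R`
according as its vertex of degree `0` is the contact `c`, its left neighbour `c - 1` or its right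
neighbour `c + 1`. Reading off the separators, a black triangle is followed by a black one or by
`L`, both `L` and `C` by `C` or `R`, and `R` by a black triangle. Hence the first two triangles
determine the third one and all separators. -/
theorem IsShieldDegree.contacts_and_sum {d : Fin 12 → ℕ} (hd : IsShieldDegree d) :
    (d 2, d 6, d 10, ∑ i, d i) ∈ ({(0, 0, 0, 6), (3, 1, 1, 15), (1, 3, 1, 15), (1, 1, 3, 15),
      (3, 3, 3, 33)} : Set (ℕ × ℕ × ℕ × ℕ)) := by
  have hT₁ : (d 1, d 2, d 3) ∈ _ := hd.triangle 2 (by decide)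
  have hT₂ : (d 5, d 6, d 7) ∈ _ := hd.triangle 6 (by decide)
  have hT₃ : (d 9, d 10, d 11) ∈ _ := hd.triangle 10 (by decide)
  have hS₁ : (d 3, d 4, d 5) ∈ _ := hd.separator 2 (by decide)
  have hS₂ : (d 7, d 8, d 9) ∈ _ := hd.separator 6 (by decide)
  have hS₃ : (d 11, d 0, d 1) ∈ _ := hd.separator 10 (by decide)
  simp only [Set.mem_insert_iff, Set.mem_singleton_iff, Prod.mk.injEq] at hT₁ hT₂ hT₃ hS₁ hS₂ hS₃ ⊢
  have hsum : ∑ i, d i =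
      d 0 + d 1 + d 2 + d 3 + d 4 + d 5 + d 6 + d 7 + d 8 + d 9 + d 10 + d 11 := by
    simp only [Fin.sum_univ_succ, Fin.sum_univ_zero, add_zero, add_assoc]
    rfl
  rcases hT₁ with ⟨h1, h2, h3⟩ | ⟨h1, h2, h3⟩ | ⟨h1, h2, h3⟩ | ⟨h1, h2, h3⟩ <;>
  rcases hT₂ with ⟨h5, h6, h7⟩ | ⟨h5, h6, h7⟩ | ⟨h5, h6, h7⟩ | ⟨h5, h6, h7⟩ <;>
  simp only [h1, h2, h3, h5, h6, h7, OfNat.ofNat_ne_zero, OfNat.zero_ne_ofNat,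
    OfNat.ofNat_ne_one, OfNat.one_ne_ofNat, one_ne_zero, zero_ne_one, true_and, false_and, and_true,
    and_false, false_or, or_false] at hS₁ hS₂ hS₃ ⊢ <;>
  omega

theorem IsShieldDegree.classification {d : Fin 12 → ℕ} (hd : IsShieldDegree d) {m : ℕ}
    (hm : #{c | c ∈ Contacts ∧ d c = 3} = m) :
    (∀ c ∈ Contacts, d c ≠ 3 → d c = m) ∧
      (m = 0 ∧ ∑ i, d i = 6 ∨ m = 1 ∧ ∑ i, d i = 15 ∨ m = 3 ∧ ∑ i, d i = 33) := by
  have hcontacts : ({c | c ∈ Contacts} : Finset (Fin 12)) = {2, 6, 10} := by decide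
  rw [Finset.filter_and, hcontacts, Finset.inter_filter, Finset.inter_univ, Finset.card_filter,
    Finset.sum_insert (by decide), Finset.sum_pair (by decide)] at hm
  have hcases := hd.contacts_and_sum
  simp only [Set.mem_insert_iff, Set.mem_singleton_iff, Prod.mk.injEq] at hcases
  simp only [Contacts, Set.mem_insert_iff, Set.mem_singleton_iff, forall_eq_or_imp, forall_eq]
  rcases hcases with ⟨h2, h6, h10, hsum⟩ | ⟨h2, h6, h10, hsum⟩ | ⟨h2, h6, h10, hsum⟩ |
    ⟨h2, h6, h10, hsum⟩ | ⟨h2, h6, h10, hsum⟩ <;> simp [h2, h6, h10, hsum, ← hm]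

/-- The perfect labelling of the shield in which all triangles have type `C`, used for the vertices
of `G` not covered by the efficient edge dominating set. -/
def freeLabel : Fin 12 → ℕ := ![0, 1, 0, 1, 0, 1, 0, 1, 0, 1, 0, 1]

/-- The perfect labelling of the shield in which the triangle at the contact `c` is black and the
two after it have types `L` and `R`, used for the vertices of `G` whose edge in the efficient edge
dominating set is attached at `c`. -/
def rootedLabel (c i : Fin 12) : ℕ := ![3, 3, 1, 0, 1, 1, 0, 1, 1, 0, 1, 3] (i - c)

theorem isPerfectLabelling_freeLabel : IsPerfectLabelling Shield freeLabel where
  eq_one_of_adj := by decide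
  existsUnique_adj := by simp only [ExistsUnique]; decide

theorem isPerfectLabelling_rootedLabel {c : Fin 12} (hc : c ∈ Contacts) :
    IsPerfectLabelling Shield (rootedLabel c) where
  eq_one_of_adj := by revert c; decide
  existsUnique_adj := by simp only [ExistsUnique]; revert c; decide

end Shield

section Magnification

variable {V : Type*} {G : SimpleGraph V} {f : V → V → Fin 12} {H K : SimpleGraph (V × Fin 12)}

theorem IsRegular'.isRegularOfDegree [G.LocallyFinite] {r : ℕ} (h : IsRegular' G r) :
    G.IsRegularOfDegree r := fun v => by
  rw [← h v, Set.ncard_eq_toFinset_card', Set.toFinset_card, SimpleGraph.card_neighborSet_eq_degree]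

/-- The subgraph of `G` formed by the edges whose links in the magnification belong to `K`. -/
def linkGraph (G : SimpleGraph V) (f : V → V → Fin 12) (K : SimpleGraph (V × Fin 12)) :
    SimpleGraph V where
  Adj v u := G.Adj v u ∧ K.Adj (v, f v u) (u, f u v)
  symm := ⟨fun _ _ hvu => ⟨hvu.1.symm, hvu.2.symm⟩⟩
  loopless := ⟨fun _ hv => hv.1.ne rfl⟩

namespace IsMagnification

variable {v u w : V} {i j : Fin 12}

theorem contact_mem (hmag : IsMagnification G f H) (hvu : G.Adj v u) : f v u ∈ Contacts :=
  hmag.1 v u hvu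

theorem eq_of_contact_eq (hmag : IsMagnification G f H) (hvu : G.Adj v u) (hvw : G.Adj v w)
    (h : f v u = f v w) : u = w :=
  hmag.2.1 v hvu hvw h

theorem exists_adj_contact_eq (hmag : IsMagnification G f H) (v : V) (hi : i ∈ Contacts) :
    ∃ u, G.Adj v u ∧ f v u = i :=
  hmag.2.2.1 v i hi

theorem adj_iff (hmag : IsMagnification G f H) :
    H.Adj (v, i) (u, j) ↔ v = u ∧ Shield.Adj i j ∨ G.Adj v u ∧ f v u = i ∧ f u v = j :=
  hmag.2.2.2 _ _

theorem adj_shield_iff (hmag : IsMagnification G f H) :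
    H.Adj (v, i) (v, j) ↔ Shield.Adj i j := by
  simp [hmag.adj_iff]

theorem adj_link (hmag : IsMagnification G f H) (hvu : G.Adj v u) :
    H.Adj (v, f v u) (u, f u v) :=
  hmag.adj_iff.2 (.inr ⟨hvu, rfl, rfl⟩)

theorem neighborSet_of_notMem_contacts (hmag : IsMagnification G f H) (hi : i ∉ Contacts) :
    H.neighborSet (v, i) = Prod.mk v '' Shield.neighborSet i := by
  ext ⟨u, j⟩
  have hlink : ¬ (G.Adj v u ∧ f v u = i ∧ f u v = j) := by
    rintro ⟨hvu, rfl, -⟩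
    exact hi (hmag.contact_mem hvu)
  simp only [SimpleGraph.mem_neighborSet, hmag.adj_iff, Set.mem_image, Prod.mk.injEq]
  grind

theorem neighborSet_contact (hmag : IsMagnification G f H) (hvu : G.Adj v u) :
    H.neighborSet (v, f v u) = insert (u, f u v) (Prod.mk v '' Shield.neighborSet (f v u)) := by
  ext ⟨w, j⟩
  have hlink : G.Adj v w ∧ f v w = f v u ∧ f w v = j ↔ w = u ∧ j = f u v := by
    constructor
    · rintro ⟨hvw, hw, rfl⟩
      obtain rfl : w = u := hmag.eq_of_contact_eq hvw hvu hw
      exact ⟨rfl, rfl⟩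
    · rintro ⟨rfl, rfl⟩
      exact ⟨hvu, rfl, rfl⟩
  simp only [SimpleGraph.mem_neighborSet, hmag.adj_iff, Set.mem_insert_iff, Set.mem_image,
    Prod.mk.injEq, hlink]
  grind

theorem ncard_neighborSet_eq_three (hmag : IsMagnification G f H) (hi : i - 2 ∉ Contacts) :
    (H.neighborSet (v, i)).ncard = 3 := by
  have hshield : (Prod.mk v '' Shield.neighborSet i).ncard = Shield.degree i := by
    rw [Set.ncard_image_of_injective _ (Prod.mk_right_injective v), Set.ncard_eq_toFinset_card',
      Set.toFinset_card, SimpleGraph.card_neighborSet_eq_degree]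
  by_cases hcontact : i ∈ Contacts
  · obtain ⟨u, hvu, rfl⟩ := hmag.exists_adj_contact_eq v hcontact
    have hdeg : ∀ c ∈ Contacts, Shield.degree c = 2 := by decide
    have hu : (u, f u v) ∉ Prod.mk v '' Shield.neighborSet (f v u) := by
      rintro ⟨j, -, hj⟩
      exact hvu.ne (Prod.mk.inj hj).1
    rw [hmag.neighborSet_contact hvu, Set.ncard_insert_of_notMem hu (Set.toFinite _), hshield,
      hdeg _ hcontact]
  · have hdeg : ∀ i, i ∉ Contacts → i - 2 ∉ Contacts → Shield.degree i = 3 := by decide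
    rw [hmag.neighborSet_of_notMem_contacts hcontact, hshield, hdeg i hcontact hi]

theorem neighborSet_separator (hmag : IsMagnification G f H) {c : Fin 12} (hc : c ∈ Contacts) :
    H.neighborSet (v, c + 2) = {(v, c + 1), (v, c + 3)} := by
  have hcontact : ∀ c ∈ Contacts, c + 2 ∉ Contacts := by decide
  have hshield : ∀ c ∈ Contacts, ∀ j, Shield.Adj (c + 2) j ↔ j = c + 1 ∨ j = c + 3 := by decide
  have hset : Shield.neighborSet (c + 2) = {c + 1, c + 3} := Set.ext (hshield c hc)
  rw [hmag.neighborSet_of_notMem_contacts (hcontact c hc), hset, Set.image_pair]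

theorem triangle_adj (hmag : IsMagnification G f H) {c : Fin 12} (hc : c ∈ Contacts) (v : V) :
    H.Adj (v, c - 1) (v, c) ∧ H.Adj (v, c) (v, c + 1) ∧ H.Adj (v, c - 1) (v, c + 1) := by
  have hshield : ∀ c ∈ Contacts,
      Shield.Adj (c - 1) c ∧ Shield.Adj c (c + 1) ∧ Shield.Adj (c - 1) (c + 1) := by decide
  simpa only [hmag.adj_shield_iff] using hshield c hc

section Degree

variable [K.LocallyFinite]

theorem degree_eq_three_of_two_le (hmag : IsMagnification G f H) (hK : IsPerfectDominating H K)
    (hi : i - 2 ∉ Contacts) (hdeg : 2 ≤ K.degree (v, i)) : K.degree (v, i) = 3 :=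
  (hK.degree_eq_ncard_of_two_le hdeg).trans (hmag.ncard_neighborSet_eq_three hi)

theorem isShieldDegree (hmag : IsMagnification G f H) (hK : IsPerfectDominating H K) (v : V) :
    IsShieldDegree fun i => K.degree (v, i) := by
  have hnotMem : ∀ c ∈ Contacts, c - 1 - 2 ∉ Contacts ∧ c - 2 ∉ Contacts ∧
      c + 1 - 2 ∉ Contacts ∧ c + 3 - 2 ∉ Contacts := by decide
  constructor
  · intro c hc
    obtain ⟨hleft, hcontact, hright, -⟩ := hnotMem c hc
    obtain ⟨hlc, hcr, hlr⟩ := hmag.triangle_adj hc v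
    simp only [Set.mem_insert_iff, Set.mem_singleton_iff, Prod.mk.injEq]
    exact (hK.degree_triangle hlc hcr hlr).imp_left fun ⟨hl, hm, hr⟩ =>
      ⟨hmag.degree_eq_three_of_two_le hK hleft hl, hmag.degree_eq_three_of_two_le hK hcontact hm,
        hmag.degree_eq_three_of_two_le hK hright hr⟩
  · intro c hc
    obtain ⟨-, -, hright, hleft⟩ := hnotMem c hc
    have hshift : ∀ c ∈ Contacts, c + 4 ∈ Contacts ∧ c + 3 = c + 4 - 1 ∧ c + 1 ≠ c + 3 ∧
        c + 2 ≠ c ∧ c + 2 ≠ c - 1 ∧ c + 2 ≠ c + 4 ∧ c + 2 ≠ c + 4 + 1 := by decide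
    obtain ⟨hc', hpred, hne, hsc, hsl, hsc', hsr'⟩ := hshift c hc
    have hne_mk {i j : Fin 12} (hij : i ≠ j) : (v, i) ≠ (v, j) := fun h => hij (Prod.mk.inj h).2
    obtain ⟨hlc, hcr, hlr⟩ := hmag.triangle_adj hc v
    obtain ⟨hlc', hcr', hlr'⟩ := hmag.triangle_adj hc' v
    rw [← hpred] at hlc' hlr'
    have hcases := hK.degree_of_neighborSet_eq_pair (hne_mk hne) (hmag.neighborSet_separator hc)
      (fun h => hK.two_le_degree_of_adj_outside_triangle hcr.symm hlc.symm hlr.symm h.symm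
        (hne_mk hsc) (hne_mk hsl))
      (fun h => hK.two_le_degree_of_adj_outside_triangle hlc' hcr' hlr' h.symm
        (hne_mk hsc') (hne_mk hsr'))
    have hr := hmag.degree_eq_three_of_two_le hK hright (v := v)
    have hl := hmag.degree_eq_three_of_two_le hK hleft (v := v)
    simp only [Set.mem_insert_iff, Set.mem_singleton_iff, Prod.mk.injEq]
    exact hcases.imp (.imp hr (.imp_right hl))
      (.imp (.imp_left hr) (.imp_left (.imp_right (.imp_right hl))))

theorem linkGraph_adj_iff (hmag : IsMagnification G f H) (hK : IsPerfectDominating H K)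
    (hvu : G.Adj v u) : (linkGraph G f K).Adj v u ↔ K.degree (v, f v u) = 3 := by
  have hc := hmag.contact_mem hvu
  constructor
  · rintro ⟨-, hlink⟩
    have hnotMem : ∀ c ∈ Contacts, c - 2 ∉ Contacts := by decide
    have hne (i : Fin 12) : (u, f u v) ≠ (v, i) := fun h => hvu.ne' (Prod.mk.inj h).1
    obtain ⟨hlc, hcr, hlr⟩ := hmag.triangle_adj hc v
    exact hmag.degree_eq_three_of_two_le hK (hnotMem _ hc)
      (hK.two_le_degree_of_adj_outside_triangle hcr hlr.symm hlc.symm hlink (hne _) (hne _))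
  · intro hdeg
    refine ⟨hvu, ?_⟩
    by_contra hlink
    have := hK.degree_add_degree (hmag.adj_link hvu) hlink
    omega

theorem degree_linkGraph [(linkGraph G f K).LocallyFinite] (hmag : IsMagnification G f H)
    (hK : IsPerfectDominating H K) (v : V) :
    (linkGraph G f K).degree v = #{c | c ∈ Contacts ∧ K.degree (v, c) = 3} := by
  rw [← SimpleGraph.card_neighborFinset_eq_degree]
  refine Finset.card_nbij (f v) (fun u hu => ?_) (fun u hu w hw => ?_) (fun c hc => ?_)
  · rw [Finset.mem_coe, SimpleGraph.mem_neighborFinset] at hu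
    rw [Finset.mem_coe, Finset.mem_filter_univ]
    exact ⟨hmag.contact_mem hu.1, (hmag.linkGraph_adj_iff hK hu.1).1 hu⟩
  · rw [Finset.mem_coe, SimpleGraph.mem_neighborFinset] at hu hw
    exact hmag.eq_of_contact_eq hu.1 hw.1
  · rw [Finset.mem_coe, Finset.mem_filter_univ] at hc
    obtain ⟨hcontact, hdeg⟩ := hc
    obtain ⟨u, hvu, rfl⟩ := hmag.exists_adj_contact_eq v hcontact
    refine ⟨u, ?_, rfl⟩
    rw [Finset.mem_coe, SimpleGraph.mem_neighborFinset]
    exact (hmag.linkGraph_adj_iff hK hvu).2 hdeg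

theorem degree_linkGraph_and_sum [(linkGraph G f K).LocallyFinite] (hmag : IsMagnification G f H)
    (hK : IsPerfectDominating H K) (v : V) :
    (linkGraph G f K).degree v = 0 ∧ ∑ i, K.degree (v, i) = 6 ∨
      (linkGraph G f K).degree v = 1 ∧ ∑ i, K.degree (v, i) = 15 ∨
      (linkGraph G f K).degree v = 3 ∧ ∑ i, K.degree (v, i) = 33 :=
  ((hmag.isShieldDegree hK v).classification (hmag.degree_linkGraph hK v).symm).2

theorem isPerfectDominating_linkGraph [(linkGraph G f K).LocallyFinite]
    (hmag : IsMagnification G f H) (hK : IsPerfectDominating H K) :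
    IsPerfectDominating G (linkGraph G f K) := by
  refine ⟨fun _ _ hvu => hvu.1, fun {v u} hvu hlink => ?_⟩
  have hdeg {v u : V} (hvu : G.Adj v u) (hlink : ¬ (linkGraph G f K).Adj v u) :
      K.degree (v, f v u) = (linkGraph G f K).degree v :=
    ((hmag.isShieldDegree hK v).classification (hmag.degree_linkGraph hK v).symm).1 _
      (hmag.contact_mem hvu) fun h => hlink ((hmag.linkGraph_adj_iff hK hvu).2 h)
  rw [← hdeg hvu hlink, ← hdeg hvu.symm fun h => hlink h.symm]
  exact hK.degree_add_degree (hmag.adj_link hvu) fun h => hlink ⟨hvu, h⟩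

theorem ten_mul_ncard_edgeSet [Fintype V] [(linkGraph G f K).LocallyFinite]
    (hmag : IsMagnification G f H) (hcubic : IsRegular' G 3) (hK : IsPerfectDominating H K) :
    10 * K.edgeSet.ncard = 57 * Fintype.card V + 108 * #{v | (linkGraph G f K).degree v = 3} := by
  classical
  have hdouble : 3 * #{v | (linkGraph G f K).degree v = 0} =
      2 * #{v | (linkGraph G f K).degree v = 1} :=
    (hmag.isPerfectDominating_linkGraph hK).mul_card_degree_eq_zero hcubic.isRegularOfDegree
  have hshield (v : V) : 10 * ∑ i, K.degree (v, i) +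
      54 * (if (linkGraph G f K).degree v = 0 then 1 else 0) =
        114 + 36 * (if (linkGraph G f K).degree v = 1 then 1 else 0) +
          216 * (if (linkGraph G f K).degree v = 3 then 1 else 0) := by
    rcases (hmag.degree_linkGraph_and_sum hK v) with h | h | h <;> simp [h]
  have hsum := Finset.sum_congr rfl fun v (_ : v ∈ Finset.univ) => hshield v
  simp only [Finset.sum_add_distrib, ← Finset.mul_sum, ← Finset.card_filter, Finset.sum_const,
    Finset.card_univ, smul_eq_mul] at hsum
  have hedges : ∑ v, ∑ i, K.degree (v, i) = 2 * K.edgeSet.ncard := by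
    rw [← Fintype.sum_prod_type fun x => K.degree x, ← SimpleGraph.coe_edgeFinset,
      Set.ncard_coe_finset]
    convert K.sum_degrees_eq_twice_card_edges
  omega

theorem ncard_edgeSet_le_iff [Fintype V] [(linkGraph G f K).LocallyFinite]
    (hmag : IsMagnification G f H) (hcubic : IsRegular' G 3) (hK : IsPerfectDominating H K) :
    (K.edgeSet.ncard : ℚ) ≤ 57 * Fintype.card V / 10 ↔
      ∀ v, (linkGraph G f K).degree v ≤ 1 := by
  have hcount := hmag.ten_mul_ncard_edgeSet hcubic hK
  rw [le_div_iff₀ (by norm_num)]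
  norm_cast
  have hle : K.edgeSet.ncard * 10 ≤ 57 * Fintype.card V ↔
      #{v | (linkGraph G f K).degree v = 3} = 0 := by omega
  rw [hle, Finset.card_filter_eq_zero_iff]
  refine ⟨fun h v => ?_, fun h v _ => ?_⟩
  · have := h v (Finset.mem_univ v)
    have := hmag.degree_linkGraph_and_sum hK v
    omega
  · have := h v
    omega

end Degree

theorem isPerfectLabelling (hmag : IsMagnification G f H) {ℓ : V → Fin 12 → ℕ}
    (hℓ : ∀ v, IsPerfectLabelling Shield (ℓ v))
    (hlink : ∀ v u, G.Adj v u → (ℓ v (f v u) = 0 ↔ ℓ u (f u v) = 1)) :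
    IsPerfectLabelling H fun x => ℓ x.1 x.2 := by
  constructor
  · rintro ⟨v, i⟩ ⟨u, j⟩ hadj hzero
    rcases hmag.adj_iff.1 hadj with ⟨rfl, hij⟩ | ⟨hvu, rfl, rfl⟩
    · exact (hℓ v).eq_one_of_adj i j hij hzero
    · exact (hlink v u hvu).1 hzero
  · rintro ⟨v, i⟩ hone
    obtain ⟨j, ⟨hij, hj⟩, huniq⟩ := (hℓ v).existsUnique_adj i hone
    refine ⟨(v, j), ⟨hmag.adj_shield_iff.2 hij, hj⟩, ?_⟩
    rintro ⟨u, k⟩ ⟨hadj, hk⟩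
    rcases hmag.adj_iff.1 hadj with ⟨rfl, hik⟩ | ⟨hvu, rfl, rfl⟩
    · rw [huniq k ⟨hik, hk⟩]
    · exact absurd ((hlink u v hvu.symm).2 hone) hk

theorem exists_isPerfectLabelling_shield (hmag : IsMagnification G f H) {L : SimpleGraph V}
    [L.LocallyFinite] (hL : L ≤ G) (hdeg : L.degree v ≤ 1) :
    ∃ ℓ : Fin 12 → ℕ, IsPerfectLabelling Shield ℓ ∧ ∀ u, G.Adj v u →
      (L.Adj v u → ℓ (f v u) = 3) ∧ (¬ L.Adj v u → ℓ (f v u) = L.degree v) := by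
  rcases Nat.le_one_iff_eq_zero_or_eq_one.1 hdeg with hzero | hone
  · have hfree : ∀ c ∈ Contacts, freeLabel c = 0 := by decide
    refine ⟨freeLabel, isPerfectLabelling_freeLabel, fun u hvu =>
      ⟨fun hLu => ?_, fun _ => (hfree _ (hmag.contact_mem hvu)).trans hzero.symm⟩⟩
    exact absurd hzero hLu.degree_pos_left.ne'
  · obtain ⟨m, hm, huniq⟩ := SimpleGraph.degree_eq_one_iff_existsUnique_adj.1 hone
    have hroot : ∀ c ∈ Contacts, ∀ c' ∈ Contacts,
        rootedLabel c c = 3 ∧ (c' ≠ c → rootedLabel c c' = 1) := by decide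
    have hc := hmag.contact_mem (hL hm)
    refine ⟨rootedLabel (f v m), isPerfectLabelling_rootedLabel hc, fun u hvu =>
      ⟨fun hLu => ?_, fun hLu => ?_⟩⟩
    · rw [huniq u hLu, (hroot _ hc _ hc).1]
    · rw [(hroot _ hc _ (hmag.contact_mem hvu)).2, hone]
      intro hfu
      rw [hmag.eq_of_contact_eq hvu (hL hm) hfu] at hLu
      exact hLu hm

theorem exists_isPerfectLabelling (hmag : IsMagnification G f H) {L : SimpleGraph V}
    [L.LocallyFinite] (hL : IsPerfectDominating G L) (hdeg : ∀ v, L.degree v ≤ 1) :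
    ∃ ℓ : V × Fin 12 → ℕ,
      IsPerfectLabelling H ℓ ∧ linkGraph G f (labelledSubgraph H ℓ) = L := by
  choose ℓ hℓ hcontact using fun v => hmag.exists_isPerfectLabelling_shield hL.le (hdeg v)
  have hlink {v u : V} (hvu : G.Adj v u) : ℓ v (f v u) = 3 ∧ ℓ u (f u v) = 3 ∧ L.Adj v u ∨
      ℓ v (f v u) + ℓ u (f u v) = 1 ∧ ¬ L.Adj v u := by
    by_cases hLvu : L.Adj v u
    · exact .inl ⟨(hcontact v u hvu).1 hLvu, (hcontact u v hvu.symm).1 hLvu.symm, hLvu⟩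
    · rw [(hcontact v u hvu).2 hLvu, (hcontact u v hvu.symm).2 fun h => hLvu h.symm]
      exact .inr ⟨hL.degree_add_degree hvu hLvu, hLvu⟩
  refine ⟨fun x => ℓ x.1 x.2, hmag.isPerfectLabelling hℓ fun v u hvu => ?_, ?_⟩
  · have := hlink hvu
    omega
  · ext v u
    refine ⟨fun ⟨hvu, _, hne⟩ => ?_, fun hLvu => ⟨hL.le hLvu, hmag.adj_link (hL.le hLvu), ?_⟩⟩
    · exact ((hlink hvu).resolve_right fun h => hne h.1).2.2
    · have := hlink (hL.le hLvu)
      grind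

end IsMagnification

end Magnification

/-- A cubic graph `G` on `n` vertices admits an efficient edge dominating set if
and only if its magnification has a perfect edge dominating set of size at most
`57 n / 10`. -/
theorem magnification_eeds_iff_peds {V : Type*} [Fintype V] (G : SimpleGraph V)
    (hcubic : IsRegular' G 3) (f : V → V → Fin 12) (H : SimpleGraph (V × Fin 12))
    (hmag : IsMagnification G f H) :
    (∃ D : Set (Sym2 V), IsEEDS G D) ↔
    (∃ P : Set (Sym2 (V × Fin 12)), IsPEDS H P ∧
      (P.ncard : ℚ) ≤ 57 * Fintype.card V / 10) := by
  classical
  constructor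
  · rintro ⟨D, hD⟩
    obtain ⟨L, rfl⟩ := exists_edgeSet_eq_of_subset hD.1
    obtain ⟨hL, hdeg⟩ := isEEDS_edgeSet_iff.1 hD
    obtain ⟨ℓ, hℓ, rfl⟩ := hmag.exists_isPerfectLabelling hL hdeg
    have hK := hℓ.isPerfectDominating
    exact ⟨_, isPEDS_edgeSet_iff.2 hK, (hmag.ncard_edgeSet_le_iff hcubic hK).2 hdeg⟩
  · rintro ⟨P, hP, hcard⟩
    obtain ⟨K, rfl⟩ := exists_edgeSet_eq_of_subset hP.1
    have hK := isPEDS_edgeSet_iff.1 hP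
    exact ⟨(linkGraph G f K).edgeSet, isEEDS_edgeSet_iff.2
      ⟨hmag.isPerfectDominating_linkGraph hK, (hmag.ncard_edgeSet_le_iff hcubic hK).1 hcard⟩⟩
end

section
/- Let r ≥ 1, let G be an r-regular finite simple graph, k ≥ 0 an integer, S(G) the 3k-subdivision of G, and P a perfect edge dominating set of S(G). Then for every edge e of G, the set S(N'[e]) contains at least 2rk - k + 1 edges of P. -/
/-- `H` is the `3k`-subdivision of `G`, witnessed by the map `ι : V → W`
(the images of the original vertices, "extremes") and, for every ordered pair
`(v, w)` of adjacent vertices, the path `p v w 0, p v w 1, …, p v w (3k+1)`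
replacing the edge `vw` (so `p v w 0 = ι v`, `p v w (3k+1) = ι w`, the `3k`
internal vertices are new, pairwise distinct, distinct for distinct edges of `G`,
and the edges of `H` are exactly the consecutive pairs of these paths).
For `k = 0` the subdivision is `G` itself. -/
def IsSubdivision {V W : Type*} (G : SimpleGraph V) (k : ℕ) (H : SimpleGraph W)
    (ι : V → W) (p : V → V → ℕ → W) : Prop :=
  Function.Injective ι ∧
  (∀ v w, G.Adj v w → p v w 0 = ι v ∧ p v w (3 * k + 1) = ι w) ∧
  (∀ v w, G.Adj v w → ∀ i ≤ 3 * k + 1, p v w i = p w v (3 * k + 1 - i)) ∧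
  (∀ v w, G.Adj v w → ∀ i ≤ 3 * k + 1, ∀ j ≤ 3 * k + 1, p v w i = p v w j → i = j) ∧
  (∀ v w, G.Adj v w → ∀ i, 0 < i → i < 3 * k + 1 → p v w i ∉ Set.range ι) ∧
  (∀ v w v' w', G.Adj v w → G.Adj v' w' → ∀ i j, 0 < i → i < 3 * k + 1 →
      0 < j → j < 3 * k + 1 → p v w i = p v' w' j → s(v, w) = s(v', w')) ∧
  (∀ x : W, (∃ v, x = ι v) ∨
      ∃ v w i, G.Adj v w ∧ 0 < i ∧ i < 3 * k + 1 ∧ x = p v w i) ∧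
  (∀ x y : W, H.Adj x y ↔ ∃ v w i, G.Adj v w ∧ i ≤ 3 * k ∧
      ((x = p v w i ∧ y = p v w (i + 1)) ∨ (y = p v w i ∧ x = p v w (i + 1))))

/-- The edge set `S(e)` of the path of the subdivision replacing the edge
`e = vw` of `G`: the edges `e_0, e_1, …, e_{3k}`. -/
def pathEdges {V W : Type*} (p : V → V → ℕ → W) (k : ℕ) (v w : V) :
    Set (Sym2 W) :=
  {e | ∃ i ≤ 3 * k, e = s(p v w i, p v w (i + 1))}

/-- `S(N'[e])` for an edge `e = vw` of `G`: the union of the edge sets of the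
paths `S(e')` over all edges `e'` of `G` sharing an endpoint with `e`
(including `e` itself). -/
def nbrPathEdges {V W : Type*} (G : SimpleGraph V) (p : V → V → ℕ → W) (k : ℕ)
    (v w : V) : Set (Sym2 W) :=
  {e | ∃ a b, G.Adj a b ∧ (a = v ∨ a = w ∨ b = v ∨ b = w) ∧ e ∈ pathEdges p k a b}

/-!
Among any three consecutive edges of a path `S(e)` at least one lies in `P`, because the middle
one is dominated. As `S(e)` has `3k + 1` edges, it contains at least `k` edges of `P`, and at
least `k + 1` if one of its end edges lies in `P`, since the other `3k` edges split into `k`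
windows. If an edge of `P` is incident to `v` or `w`, it is such an end edge of some path of
`S(N'[vw])`. Otherwise the end edges of `S(vw)` must be dominated from inside the path, so `P`
contains the second and the penultimate edge; dropping the two outer edges on either side leaves
`k - 1` windows, again giving `k + 1` edges. Summing over the `deg v + deg w - 1` disjoint paths
yields the bound.
-/

section Count

variable {f : ℕ → Prop} [DecidablePred f] {k : ℕ}

theorem count_add_le_count_add_three_mul {a m : ℕ}
    (hf : ∀ i, a ≤ i → i + 2 < a + 3 * m → f i ∨ f (i + 1) ∨ f (i + 2)) :
    Nat.count f a + m ≤ Nat.count f (a + 3 * m) := by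
  induction m with
  | zero => rfl
  | succ m ih =>
    have hinit := ih fun i hai hi ↦ hf i hai (by omega)
    have hwindow : Nat.count f (a + 3 * m) < Nat.count f (a + 3 * (m + 1)) := by
      rcases hf (a + 3 * m) (by omega) (by omega) with h | h | h <;>
        exact (Nat.count_monotone f (by omega)).trans_lt (Nat.count_strict_mono h (by omega))
    omega

theorem le_count_three_mul_succ
    (hf : ∀ i, i + 2 ≤ 3 * k → f i ∨ f (i + 1) ∨ f (i + 2)) :
    k ≤ Nat.count f (3 * k + 1) := by
  have hwindows : Nat.count f 0 + k ≤ Nat.count f (0 + 3 * k) :=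
    count_add_le_count_add_three_mul fun i _ hi ↦ hf i (by omega)
  have hmono : Nat.count f (0 + 3 * k) ≤ Nat.count f (3 * k + 1) :=
    Nat.count_monotone f (by omega)
  omega

theorem lt_count_of_zero
    (hf : ∀ i, i + 2 ≤ 3 * k → f i ∨ f (i + 1) ∨ f (i + 2)) (h0 : f 0) :
    k < Nat.count f (3 * k + 1) := by
  have hfirst : Nat.count f 0 < Nat.count f 1 := Nat.count_strict_mono h0 one_pos
  have hwindows : Nat.count f 1 + k ≤ Nat.count f (1 + 3 * k) :=
    count_add_le_count_add_three_mul fun i _ hi ↦ hf i (by omega)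
  rw [add_comm 1] at hwindows
  omega

theorem lt_count_of_one_of_three_mul_sub_one (hk : 0 < k)
    (hf : ∀ i, i + 2 ≤ 3 * k → f i ∨ f (i + 1) ∨ f (i + 2)) (h1 : f 1)
    (hlast : f (3 * k - 1)) : k < Nat.count f (3 * k + 1) := by
  have hfirst : Nat.count f 1 < Nat.count f 2 := Nat.count_strict_mono h1 one_lt_two
  have hwindows : Nat.count f 2 + (k - 1) ≤ Nat.count f (2 + 3 * (k - 1)) :=
    count_add_le_count_add_three_mul fun i _ hi ↦ hf i (by omega)
  have hlast' : Nat.count f (3 * k - 1) < Nat.count f (3 * k + 1) :=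
    Nat.count_strict_mono hlast (by omega)
  rw [show 2 + 3 * (k - 1) = 3 * k - 1 by omega] at hwindows
  omega

end Count

theorem ncard_mul_lt_ncard_biUnion {α β : Type*} {t : Set β} {s : β → Set α} {k : ℕ} {j : β}
    (ht : t.Finite) (hs : ∀ i ∈ t, (s i).Finite) (hdisj : t.PairwiseDisjoint s)
    (hle : ∀ i ∈ t, k ≤ (s i).ncard) (hj : j ∈ t) (hlt : k < (s j).ncard) :
    t.ncard * k < (⋃ i ∈ t, s i).ncard := by
  rw [ht.ncard_biUnion hs hdisj, finsum_mem_eq_finite_toFinset_sum _ ht,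
    Set.ncard_eq_toFinset_card t ht, ← smul_eq_mul, ← Finset.sum_const]
  exact Finset.sum_lt_sum (fun i hi ↦ hle i (ht.mem_toFinset.1 hi))
    ⟨j, ht.mem_toFinset.2 hj, hlt⟩

section Incidence

variable {V : Type*} {G : SimpleGraph V} {v w : V}

theorem finite_incidenceSet (hv : (G.neighborSet v).Finite) : (G.incidenceSet v).Finite := by
  classical
  exact Set.finite_coe_iff.1 ((G.incidenceSetEquivNeighborSet v).finite_iff.2 hv.to_subtype)

theorem ncard_incidenceSet (v : V) : (G.incidenceSet v).ncard = (G.neighborSet v).ncard := by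
  classical
  exact Nat.card_congr (G.incidenceSetEquivNeighborSet v)

theorem ncard_incidenceSet_union_incidenceSet (hv : (G.neighborSet v).Finite)
    (hw : (G.neighborSet w).Finite) (hvw : G.Adj v w) :
    (G.incidenceSet v ∪ G.incidenceSet w).ncard =
      (G.neighborSet v).ncard + (G.neighborSet w).ncard - 1 := by
  rw [← ncard_incidenceSet v, ← ncard_incidenceSet w, ← Set.ncard_union_add_ncard_inter _ _
    (finite_incidenceSet hv) (finite_incidenceSet hw),
    G.incidenceSet_inter_incidenceSet_of_adj hvw, Set.ncard_singleton, Nat.add_sub_cancel]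

end Incidence

section Paths

variable {V W : Type*} {p : V → V → ℕ → W} {k : ℕ} {a b : V}

/-- The edge `e_i` of the path `S(e)` replacing `e = ab`, where the indices count from `a`. -/
def pathEdge (p : V → V → ℕ → W) (a b : V) (i : ℕ) : Sym2 W :=
  s(p a b i, p a b (i + 1))

/-- The edge set of the path `S(e)` as a function of the unordered edge `e`: the union of
`pathEdges` over both orientations of `e`, which coincide in a subdivision. -/
def subdividedEdge (p : V → V → ℕ → W) (k : ℕ) (e : Sym2 V) : Set (Sym2 W) :=
  {f | ∃ a b, e = s(a, b) ∧ f ∈ pathEdges p k a b}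

theorem pathEdges_eq_image (p : V → V → ℕ → W) (k : ℕ) (a b : V) :
    pathEdges p k a b = pathEdge p a b '' Set.Iic (3 * k) := by
  ext f
  simp only [pathEdges, pathEdge, Set.mem_ofPred_eq, Set.mem_image, Set.mem_Iic, eq_comm]

theorem finite_pathEdges (p : V → V → ℕ → W) (k : ℕ) (a b : V) :
    (pathEdges p k a b).Finite := by
  rw [pathEdges_eq_image]
  exact (Set.finite_Iic _).image _

theorem nbrPathEdges_eq_biUnion (G : SimpleGraph V) (p : V → V → ℕ → W) (k : ℕ) (v w : V) :
    nbrPathEdges G p k v w =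
      ⋃ e ∈ G.incidenceSet v ∪ G.incidenceSet w, subdividedEdge p k e := by
  ext f
  simp only [Set.mem_iUnion₂, exists_prop]
  constructor
  · rintro ⟨a, b, hab, hinc, hf⟩
    refine ⟨s(a, b), ?_, a, b, rfl, hf⟩
    simp only [Set.mem_union, SimpleGraph.mk'_mem_incidenceSet_iff]
    tauto
  · rintro ⟨_, hinc, a, b, rfl, hf⟩
    simp only [Set.mem_union, SimpleGraph.mk'_mem_incidenceSet_iff] at hinc
    exact ⟨a, b, by tauto, by tauto, hf⟩

end Paths

namespace IsSubdivision

variable {V W : Type*} {G : SimpleGraph V} {k : ℕ} {H : SimpleGraph W} {ι : V → W}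
  {p : V → V → ℕ → W} {a b c d : V} {i j : ℕ} {e : Sym2 W}

theorem injective (hsub : IsSubdivision G k H ι p) : Function.Injective ι :=
  hsub.1

theorem path_zero (hsub : IsSubdivision G k H ι p) (hab : G.Adj a b) : p a b 0 = ι a :=
  (hsub.2.1 a b hab).1

theorem path_last (hsub : IsSubdivision G k H ι p) (hab : G.Adj a b) :
    p a b (3 * k + 1) = ι b :=
  (hsub.2.1 a b hab).2

theorem path_reverse (hsub : IsSubdivision G k H ι p) (hab : G.Adj a b)
    (hi : i ≤ 3 * k + 1) : p a b i = p b a (3 * k + 1 - i) :=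
  hsub.2.2.1 a b hab i hi

theorem path_injOn (hsub : IsSubdivision G k H ι p) (hab : G.Adj a b) :
    Set.InjOn (p a b) (Set.Iic (3 * k + 1)) :=
  fun i hi j hj ↦ hsub.2.2.2.1 a b hab i hi j hj

theorem path_ne_extreme (hsub : IsSubdivision G k H ι p) (hab : G.Adj a b) (hi0 : 0 < i)
    (hi : i < 3 * k + 1) (c : V) : p a b i ≠ ι c :=
  fun h ↦ hsub.2.2.2.2.1 a b hab i hi0 hi ⟨c, h.symm⟩

theorem edge_eq_of_path_eq (hsub : IsSubdivision G k H ι p) (hab : G.Adj a b)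
    (hcd : G.Adj c d) (hi0 : 0 < i) (hi : i < 3 * k + 1) (hj : j ≤ 3 * k + 1)
    (h : p a b i = p c d j) : s(a, b) = s(c, d) := by
  have hne := hsub.path_ne_extreme hab hi0 hi
  have hj0 : j ≠ 0 := by
    rintro rfl
    exact hne c (h.trans (hsub.path_zero hcd))
  have hjlast : j ≠ 3 * k + 1 := by
    rintro rfl
    exact hne d (h.trans (hsub.path_last hcd))
  exact hsub.2.2.2.2.2.1 a b c d hab hcd i j hi0 hi (by omega) (by omega) h

theorem edge_eq_of_path_mem_pathEdge (hsub : IsSubdivision G k H ι p) (hab : G.Adj a b)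
    (hcd : G.Adj c d) (hi0 : 0 < i) (hi : i < 3 * k + 1) (hj : j ≤ 3 * k)
    (h : p a b i ∈ pathEdge p c d j) : s(a, b) = s(c, d) := by
  rcases Sym2.mem_iff.1 h with h | h <;>
    exact hsub.edge_eq_of_path_eq hab hcd hi0 hi (by omega) h

theorem pathEdge_reverse (hsub : IsSubdivision G k H ι p) (hab : G.Adj a b)
    (hi : i ≤ 3 * k) : pathEdge p a b i = pathEdge p b a (3 * k - i) := by
  rw [pathEdge, hsub.path_reverse hab (by omega), hsub.path_reverse hab (by omega), Sym2.eq_swap,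
    pathEdge, Nat.add_sub_add_right, Nat.sub_add_comm hi]

theorem pathEdge_injOn (hsub : IsSubdivision G k H ι p) (hab : G.Adj a b) :
    Set.InjOn (pathEdge p a b) (Set.Iic (3 * k)) := by
  intro i hi j hj h
  rw [Set.mem_Iic] at hi hj
  have hinj {m n : ℕ} (hm : m ≤ 3 * k + 1) (hn : n ≤ 3 * k + 1) (h : p a b m = p a b n) :
      m = n := hsub.path_injOn hab hm hn h
  rcases Sym2.eq_iff.1 h with ⟨h, -⟩ | ⟨h, h'⟩
  · exact hinj (by omega) (by omega) h
  · have hij := hinj (by omega) (by omega) h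
    have hji := hinj (by omega) (by omega) h'
    omega

theorem mem_edgeSet_iff (hsub : IsSubdivision G k H ι p) :
    e ∈ H.edgeSet ↔ ∃ a b i, G.Adj a b ∧ i ≤ 3 * k ∧ e = pathEdge p a b i := by
  induction e using Sym2.ind with
  | _ x y =>
    simp only [SimpleGraph.mem_edgeSet, hsub.2.2.2.2.2.2.2 x y, pathEdge, Sym2.eq_iff,
      and_comm (a := y = _)]

theorem pathEdge_mem_edgeSet (hsub : IsSubdivision G k H ι p) (hab : G.Adj a b)
    (hi : i ≤ 3 * k) : pathEdge p a b i ∈ H.edgeSet :=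
  hsub.mem_edgeSet_iff.2 ⟨a, b, i, hab, hi, rfl⟩

theorem eq_pathEdge_zero_of_extreme_mem (hsub : IsSubdivision G k H ι p)
    (he : e ∈ H.edgeSet) (hae : ι a ∈ e) : ∃ b, G.Adj a b ∧ e = pathEdge p a b 0 := by
  obtain ⟨c, d, j, hcd, hj, rfl⟩ := hsub.mem_edgeSet_iff.1 he
  rcases Sym2.mem_iff.1 hae with h | h
  · obtain rfl : j = 0 := by
      by_contra hj0
      exact hsub.path_ne_extreme hcd (by omega) (by omega) a h.symm
    obtain rfl := hsub.injective (h.trans (hsub.path_zero hcd))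
    exact ⟨d, hcd, rfl⟩
  · obtain rfl : j = 3 * k := by
      by_contra hjlast
      exact hsub.path_ne_extreme hcd (by omega) (by omega) a h.symm
    obtain rfl := hsub.injective (h.trans (hsub.path_last hcd))
    exact ⟨c, hcd.symm, by rw [hsub.pathEdge_reverse hcd le_rfl, Nat.sub_self]⟩

theorem eq_pathEdge_of_path_succ_mem (hsub : IsSubdivision G k H ι p) (hab : G.Adj a b)
    (hi : i < 3 * k) (he : e ∈ H.edgeSet) (hmem : p a b (i + 1) ∈ e) :
    e = pathEdge p a b i ∨ e = pathEdge p a b (i + 1) := by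
  obtain ⟨j, hj, rfl⟩ : ∃ j ≤ 3 * k, e = pathEdge p a b j := by
    obtain ⟨c, d, j, hcd, hj, rfl⟩ := hsub.mem_edgeSet_iff.1 he
    have hedge : s(a, b) = s(c, d) :=
      hsub.edge_eq_of_path_mem_pathEdge hab hcd (by omega) (by omega) hj hmem
    rcases Sym2.eq_iff.1 hedge with ⟨rfl, rfl⟩ | ⟨rfl, rfl⟩
    · exact ⟨j, hj, rfl⟩
    · exact ⟨3 * k - j, by omega, hsub.pathEdge_reverse hcd hj⟩
  rcases Sym2.mem_iff.1 hmem with h | h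
  · right
    rw [hsub.path_injOn hab (Set.mem_Iic.2 (by omega)) (Set.mem_Iic.2 (by omega)) h]
  · left
    rw [Nat.succ_injective
      (hsub.path_injOn hab (Set.mem_Iic.2 (by omega)) (Set.mem_Iic.2 (by omega)) h)]

theorem edge_eq_of_mem_pathEdges (hsub : IsSubdivision G k H ι p) (hab : G.Adj a b)
    (hcd : G.Adj c d) (he : e ∈ pathEdges p k a b) (he' : e ∈ pathEdges p k c d) :
    s(a, b) = s(c, d) := by
  obtain ⟨i, hi, rfl⟩ := he
  obtain ⟨j, hj, h : pathEdge p a b i = pathEdge p c d j⟩ := he'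
  rcases k.eq_zero_or_pos with rfl | hk
  · obtain ⟨rfl, rfl⟩ : i = 0 ∧ j = 0 := by omega
    rw [pathEdge, pathEdge, hsub.path_zero hab, hsub.path_zero hcd,
      hsub.path_last hab, hsub.path_last hcd] at h
    exact Sym2.map.injective hsub.injective h
  · rcases i.eq_zero_or_pos with rfl | hi0
    · exact hsub.edge_eq_of_path_mem_pathEdge hab hcd one_pos (by omega) hj
        (h ▸ Sym2.mem_mk_right _ _)
    · exact hsub.edge_eq_of_path_mem_pathEdge hab hcd hi0 (by omega) hj
        (h ▸ Sym2.mem_mk_left _ _)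

theorem pathEdges_comm (hsub : IsSubdivision G k H ι p) (hab : G.Adj a b) :
    pathEdges p k a b = pathEdges p k b a := by
  have hsubset {a b : V} (hab : G.Adj a b) : pathEdges p k a b ⊆ pathEdges p k b a := by
    rintro _ ⟨i, hi, rfl⟩
    exact ⟨3 * k - i, Nat.sub_le _ _, hsub.pathEdge_reverse hab hi⟩
  exact (hsubset hab).antisymm (hsubset hab.symm)

theorem subdividedEdge_mk (hsub : IsSubdivision G k H ι p) (hab : G.Adj a b) :
    subdividedEdge p k s(a, b) = pathEdges p k a b := by
  ext f
  constructor
  · rintro ⟨c, d, hcd, hf⟩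
    rcases Sym2.eq_iff.1 hcd with ⟨rfl, rfl⟩ | ⟨rfl, rfl⟩
    · exact hf
    · rwa [hsub.pathEdges_comm hab]
  · exact fun hf ↦ ⟨a, b, rfl, hf⟩

theorem pairwiseDisjoint_subdividedEdge (hsub : IsSubdivision G k H ι p) :
    G.edgeSet.PairwiseDisjoint (subdividedEdge p k) := by
  rintro _ he _ he' hne
  refine Set.disjoint_left.2 ?_
  rintro f ⟨a, b, rfl, hf⟩ ⟨c, d, rfl, hf'⟩
  exact hne (hsub.edge_eq_of_mem_pathEdges he he' hf hf')

open Classical in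
theorem ncard_inter_pathEdges (hsub : IsSubdivision G k H ι p) (hab : G.Adj a b)
    (P : Set (Sym2 W)) :
    (P ∩ pathEdges p k a b).ncard = Nat.count (pathEdge p a b · ∈ P) (3 * k + 1) := by
  have himage : P ∩ pathEdges p k a b =
      pathEdge p a b '' ↑{i ∈ Finset.range (3 * k + 1) | pathEdge p a b i ∈ P} := by
    rw [pathEdges_eq_image, ← Set.image_preimage_inter]
    congr 1
    ext i
    simp [and_comm]
  rw [himage, Set.InjOn.ncard_image, Set.ncard_coe_finset, Nat.count_eq_card_filter_range]
  exact (hsub.pathEdge_injOn hab).mono fun i hi ↦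
    Nat.lt_succ_iff.1 (Finset.mem_range.1 (Finset.mem_filter.1 hi).1)

end IsSubdivision

/-- `P` is an edge dominating set of `G`: every edge is dominated by at least one edge of `P`,
so perfect edge dominating sets are a special case. -/
def IsEdgeDominatingSet {V : Type*} (G : SimpleGraph V) (P : Set (Sym2 V)) : Prop :=
  P ⊆ G.edgeSet ∧ ∀ f ∈ G.edgeSet, ∃ e ∈ P, edgeDom e f

theorem IsPEDS.isEdgeDominatingSet {V : Type*} {G : SimpleGraph V} {P : Set (Sym2 V)}
    (hP : IsPEDS G P) : IsEdgeDominatingSet G P := by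
  refine ⟨hP.1, fun f hf ↦ ?_⟩
  by_cases hfP : f ∈ P
  · exact ⟨f, hfP, f.out.1, f.out_fst_mem, f.out_fst_mem⟩
  · exact (hP.2 f hf hfP).exists

namespace IsEdgeDominatingSet

variable {V W : Type*} {G : SimpleGraph V} {k : ℕ} {H : SimpleGraph W} {ι : V → W}
  {p : V → V → ℕ → W} {P : Set (Sym2 W)} {a b : V} {i : ℕ}

theorem exists_path_mem (hP : IsEdgeDominatingSet H P) (hsub : IsSubdivision G k H ι p)
    (hab : G.Adj a b) (hi : i ≤ 3 * k) :
    ∃ e ∈ P, p a b i ∈ e ∨ p a b (i + 1) ∈ e := by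
  obtain ⟨e, heP, x, hxe, hx⟩ := hP.2 _ (hsub.pathEdge_mem_edgeSet hab hi)
  rcases Sym2.mem_iff.1 hx with rfl | rfl
  · exact ⟨e, heP, Or.inl hxe⟩
  · exact ⟨e, heP, Or.inr hxe⟩

theorem pathEdge_mem_or_of_path_succ_mem (hP : IsEdgeDominatingSet H P)
    (hsub : IsSubdivision G k H ι p) (hab : G.Adj a b) (hi : i < 3 * k) {e : Sym2 W}
    (he : e ∈ P) (hmem : p a b (i + 1) ∈ e) :
    pathEdge p a b i ∈ P ∨ pathEdge p a b (i + 1) ∈ P := by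
  rcases hsub.eq_pathEdge_of_path_succ_mem hab hi (hP.1 he) hmem with rfl | rfl
  · exact Or.inl he
  · exact Or.inr he

theorem pathEdge_window (hP : IsEdgeDominatingSet H P) (hsub : IsSubdivision G k H ι p)
    (hab : G.Adj a b) (i : ℕ) (hi : i + 2 ≤ 3 * k) :
    pathEdge p a b i ∈ P ∨ pathEdge p a b (i + 1) ∈ P ∨ pathEdge p a b (i + 2) ∈ P := by
  obtain ⟨e, he, hmem | hmem⟩ := hP.exists_path_mem hsub hab (i := i + 1) (by omega)
  · exact (hP.pathEdge_mem_or_of_path_succ_mem hsub hab (by omega) he hmem).imp_right Or.inl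
  · exact Or.inr (hP.pathEdge_mem_or_of_path_succ_mem hsub hab (by omega) he hmem)

theorem pathEdge_one_mem (hP : IsEdgeDominatingSet H P) (hsub : IsSubdivision G k H ι p)
    (hab : G.Adj a b) (hk : 0 < k) (ha : ∀ e ∈ P, ι a ∉ e) : pathEdge p a b 1 ∈ P := by
  obtain ⟨e, he, hmem | hmem⟩ := hP.exists_path_mem hsub hab (Nat.zero_le _)
  · exact absurd (hsub.path_zero hab ▸ hmem) (ha e he)
  · refine (hP.pathEdge_mem_or_of_path_succ_mem hsub hab (by omega) he hmem).resolve_left ?_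
    exact fun h0 ↦ ha _ h0 (hsub.path_zero hab ▸ Sym2.mem_mk_left _ _)

theorem le_ncard_inter_pathEdges (hP : IsEdgeDominatingSet H P)
    (hsub : IsSubdivision G k H ι p) (hab : G.Adj a b) :
    k ≤ (P ∩ pathEdges p k a b).ncard := by
  classical
  rw [hsub.ncard_inter_pathEdges hab]
  exact le_count_three_mul_succ (hP.pathEdge_window hsub hab)

theorem lt_ncard_inter_pathEdges_of_pathEdge_zero_mem (hP : IsEdgeDominatingSet H P)
    (hsub : IsSubdivision G k H ι p) (hab : G.Adj a b) (h0 : pathEdge p a b 0 ∈ P) :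
    k < (P ∩ pathEdges p k a b).ncard := by
  classical
  rw [hsub.ncard_inter_pathEdges hab]
  exact lt_count_of_zero (hP.pathEdge_window hsub hab) h0

theorem lt_ncard_inter_pathEdges_of_extremes_notMem (hP : IsEdgeDominatingSet H P)
    (hsub : IsSubdivision G k H ι p) (hab : G.Adj a b) (ha : ∀ e ∈ P, ι a ∉ e)
    (hb : ∀ e ∈ P, ι b ∉ e) : k < (P ∩ pathEdges p k a b).ncard := by
  classical
  have hk : 0 < k := by
    by_contra! hk0
    obtain rfl := Nat.le_zero.1 hk0
    obtain ⟨e, he, hmem | hmem⟩ := hP.exists_path_mem hsub hab le_rfl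
    · exact ha e he (hsub.path_zero hab ▸ hmem)
    · exact hb e he (hsub.path_last hab ▸ hmem)
  have hsecond : pathEdge p a b 1 ∈ P := hP.pathEdge_one_mem hsub hab hk ha
  have hpenultimate : pathEdge p a b (3 * k - 1) ∈ P := by
    rw [← hsub.pathEdge_reverse hab.symm (by omega)]
    exact hP.pathEdge_one_mem hsub hab.symm hk hb
  rw [hsub.ncard_inter_pathEdges hab]
  exact lt_count_of_one_of_three_mul_sub_one hk (hP.pathEdge_window hsub hab) hsecond hpenultimate

theorem exists_lt_ncard_inter_subdividedEdge (hP : IsEdgeDominatingSet H P)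
    (hsub : IsSubdivision G k H ι p) (hab : G.Adj a b) :
    ∃ e ∈ G.incidenceSet a ∪ G.incidenceSet b, k < (P ∩ subdividedEdge p k e).ncard := by
  have hextreme {c : V} (h : ∃ e ∈ P, ι c ∈ e) :
      ∃ e ∈ G.incidenceSet c, k < (P ∩ subdividedEdge p k e).ncard := by
    obtain ⟨_, he, hce⟩ := h
    obtain ⟨d, hcd, rfl⟩ := hsub.eq_pathEdge_zero_of_extreme_mem (hP.1 he) hce
    refine ⟨s(c, d), G.mk'_mem_incidenceSet_left_iff.2 hcd, ?_⟩
    rw [hsub.subdividedEdge_mk hcd]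
    exact hP.lt_ncard_inter_pathEdges_of_pathEdge_zero_mem hsub hcd he
  by_cases ha : ∃ e ∈ P, ι a ∈ e
  · exact (hextreme ha).imp fun _ ↦ And.imp_left Or.inl
  by_cases hb : ∃ e ∈ P, ι b ∈ e
  · exact (hextreme hb).imp fun _ ↦ And.imp_left Or.inr
  push Not at ha hb
  refine ⟨s(a, b), Or.inl (G.mk'_mem_incidenceSet_left_iff.2 hab), ?_⟩
  rw [hsub.subdividedEdge_mk hab]
  exact hP.lt_ncard_inter_pathEdges_of_extremes_notMem hsub hab ha hb

end IsEdgeDominatingSet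

theorem subdivision_nbr_lower_bound_general {V W : Type*} {G : SimpleGraph V} {k : ℕ}
    {H : SimpleGraph W} {ι : V → W} {p : V → V → ℕ → W} (hsub : IsSubdivision G k H ι p)
    {P : Set (Sym2 W)} (hP : IsEdgeDominatingSet H P) {v w : V} (hvw : G.Adj v w)
    (hv : (G.neighborSet v).Finite) (hw : (G.neighborSet w).Finite) :
    ((G.neighborSet v).ncard + (G.neighborSet w).ncard - 1) * k + 1 ≤
      (P ∩ nbrPathEdges G p k v w).ncard := by
  have hN : G.incidenceSet v ∪ G.incidenceSet w ⊆ G.edgeSet :=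
    Set.union_subset (G.incidenceSet_subset v) (G.incidenceSet_subset w)
  obtain ⟨e₀, he₀, hlt⟩ := hP.exists_lt_ncard_inter_subdividedEdge hsub hvw
  rw [← ncard_incidenceSet_union_incidenceSet hv hw hvw, nbrPathEdges_eq_biUnion,
    Set.inter_iUnion₂]
  have hfinite : ∀ e ∈ G.incidenceSet v ∪ G.incidenceSet w,
      (P ∩ subdividedEdge p k e).Finite :=
    Sym2.ind fun a b hab ↦ by
      rw [hsub.subdividedEdge_mk (hN hab)]
      exact (finite_pathEdges p k a b).inter_of_right P
  have hle : ∀ e ∈ G.incidenceSet v ∪ G.incidenceSet w,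
      k ≤ (P ∩ subdividedEdge p k e).ncard :=
    Sym2.ind fun a b hab ↦ by
      rw [hsub.subdividedEdge_mk (hN hab)]
      exact hP.le_ncard_inter_pathEdges hsub (hN hab)
  have hdisj : (G.incidenceSet v ∪ G.incidenceSet w).PairwiseDisjoint
      fun e ↦ P ∩ subdividedEdge p k e :=
    (hsub.pairwiseDisjoint_subdividedEdge.subset hN).mono fun _ ↦ Set.inter_subset_right
  exact ncard_mul_lt_ncard_biUnion ((finite_incidenceSet hv).union (finite_incidenceSet hw))
    hfinite hdisj hle he₀ hlt

/-- For every edge `e` of an `r`-regular graph `G` (`r ≥ 1`), the set `S(N'[e])`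
contains at least `2rk - k + 1` edges of any perfect edge dominating set of the
`3k`-subdivision `S(G)`. -/
theorem subdivision_nbr_lower_bound {V W : Type*} [Fintype V] [Fintype W]
    (r : ℕ) (hr : 1 ≤ r) (G : SimpleGraph V) (hreg : IsRegular' G r) (k : ℕ)
    (H : SimpleGraph W) (ι : V → W) (p : V → V → ℕ → W)
    (hsub : IsSubdivision G k H ι p) (P : Set (Sym2 W)) (hP : IsPEDS H P)
    {v w : V} (hvw : G.Adj v w) :
    2 * r * k - k + 1 ≤ (P ∩ nbrPathEdges G p k v w).ncard := by
  have hbound := subdivision_nbr_lower_bound_general hsub hP.isEdgeDominatingSet hvw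
    (Set.toFinite _) (Set.toFinite _)
  rwa [hreg v, hreg w, ← two_mul, tsub_mul, one_mul] at hbound
end
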